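/- arXiv:2602.13729 — 7 statements merged into one kernel-verified Lean document; each statement's English description precedes it below -/
import Mathlib

section
/- Let K ≥ 1 and p ≥ 1 be integers, let 0 < t₁ ≤ t₂ ≤ ⋯ ≤ t_K be real numbers, and let O₁, …, O_K ⊆ {1,…,p} be nonempty sets with ⋃_{i=1}^K O_i = {1,…,p}. Let Σ ∈ ℝ^{p×p} be symmetric positive-definite and for each i set R_i = Σ_{O_i}ᵀ ∈ ℝ^{p×|O_i|} (the matrix whose columns are the columns of Σ indexed by O_i). For each i ∈ {1,…,K} let C_i ∈ ℝ^{|O_i|×|O_i|} be symmetric positive-definite with μ_C I ⪯ C_i ⪯ Ω_C I for constants μ_C, Ω_C > 0. Set S = t₁R₁C₁R₁ᵀ + ⋯ + t_K R_K C_K R_Kᵀ. Then S is invertible and there exists a constant F depending only on K such that for every l ∈ {1,…,K}: ‖R_lᵀ S^{-2} R_l‖_op = ‖S^{-1} R_l‖_op² ≤ F · (λ_max(Σ)⁶ / λ_min(Σ)⁸) · max{1, Ω_C^{2K}} / (t_l² · min{μ_C^{2K}, 1}). -/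
/-!
Write `Rᵢ = Σ Eᵢ`, with `Eᵢ` the coordinate inclusion of `Oᵢ`. Then `S = Σ M Σ` for
`M = ∑ tᵢ Eᵢ Cᵢ Eᵢᵀ`, hence `S⁻¹ R_l = Σ⁻¹ M⁻¹ E_l`, and everything reduces to bounding
the solution `x` of `M x = w` for `w` supported in `O_l`.

Let `H_k` be the union of the `Oᵢ` with `i ≥ k` (`tailSet`). Testing the equation with `x` itself
gives `μ t_l |x|²_{H_l} ≤ ⟨x, w⟩ ≤ |x|_{H_l} |w|`. For `k < l` the right-hand side `w`
vanishes off `H_{k+1}`, so the part of `x` off `H_{k+1}` minimises the energy of the levels `≤ k`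
given the part on `H_{k+1}`; comparing energies bounds `|x|²_{H_k}` by
`(1 + K Ω / μ) |x|²_{H_{k+1}}`, the weight `t_k` cancelling (`sqOn_tailSet_step`). Descending from
`l` to `0` gives `|x|² ≤ (1 + K Ω / μ)^l |w|² / (μ t_l)²` (`sqOn_solution_le`), which also
shows that `M` is injective. Levels are numbered from `0`. One obtains `F(K) = (K + 1)^K`, and the factor
`λ_min(Σ)⁻²` is at most `λ_max(Σ)⁶ / λ_min(Σ)⁸`.
-/

open Matrix BigOperators

/-- Euclidean norm of a vector. -/
noncomputable def eNorm {n : Type*} [Fintype n] (v : n → ℝ) : ℝ :=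
  Real.sqrt (∑ i, (v i) ^ 2)

/-- Operator norm of a matrix (with respect to Euclidean norms). -/
noncomputable def opNorm {m n : Type*} [Fintype m] [Fintype n] (A : Matrix m n ℝ) : ℝ :=
  sInf {c : ℝ | 0 ≤ c ∧ ∀ x : n → ℝ, eNorm (A.mulVec x) ≤ c * eNorm x}

/-- Smallest eigenvalue of a symmetric matrix, via the Rayleigh quotient. -/
noncomputable def lamMin {n : Type*} [Fintype n] (A : Matrix n n ℝ) : ℝ :=
  sInf {r : ℝ | ∃ x : n → ℝ, eNorm x = 1 ∧ r = x ⬝ᵥ A.mulVec x}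

/-- Largest eigenvalue of a symmetric matrix, via the Rayleigh quotient. -/
noncomputable def lamMax {n : Type*} [Fintype n] (A : Matrix n n ℝ) : ℝ :=
  sSup {r : ℝ | ∃ x : n → ℝ, eNorm x = 1 ∧ r = x ⬝ᵥ A.mulVec x}

/-- Loewner order `A ⪯ B` on symmetric matrices. -/
def Loewner {n : Type*} [Fintype n] (A B : Matrix n n ℝ) : Prop :=
  ∀ x : n → ℝ, x ⬝ᵥ A.mulVec x ≤ x ⬝ᵥ B.mulVec x

/-! ### The multilevel estimate -/

/-- The squared Euclidean norm of the restriction of `x` to the coordinates in `s`. -/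
def sqOn {p : ℕ} (s : Finset (Fin p)) (x : Fin p → ℝ) : ℝ := ∑ a ∈ s, x a ^ 2

/-- The union of the sets `O i` with `k ≤ i`; the level `k` is a natural number, so that
`k + 1` makes sense for every index `k : Fin K`. -/
def tailSet {K p : ℕ} (O : Fin K → Finset (Fin p)) (k : ℕ) : Finset (Fin p) :=
  Finset.univ.filter fun a => ∃ i : Fin K, k ≤ i.val ∧ a ∈ O i

lemma sqOn_nonneg {p : ℕ} (s : Finset (Fin p)) (x : Fin p → ℝ) : 0 ≤ sqOn s x :=
  Finset.sum_nonneg fun _ _ => sq_nonneg _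

lemma sqOn_mono {p : ℕ} {s u : Finset (Fin p)} (h : s ⊆ u) (x : Fin p → ℝ) :
    sqOn s x ≤ sqOn u x :=
  Finset.sum_le_sum_of_subset_of_nonneg h fun _ _ _ => sq_nonneg _

lemma sqOn_tailSet_le {K p : ℕ} (O : Fin K → Finset (Fin p)) (k : ℕ) (x : Fin p → ℝ) :
    sqOn (tailSet O k) x ≤ ∑ i : Fin K, if k ≤ i.val then sqOn (O i) x else 0 := by
  have h1 : ∀ i : Fin K, (if k ≤ i.val then sqOn (O i) x else 0)
      = ∑ a, if k ≤ i.val ∧ a ∈ O i then x a ^ 2 else 0 := by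
    intro i
    by_cases h : k ≤ i.val <;> simp [h, sqOn]
  simp_rw [h1]
  rw [Finset.sum_comm, sqOn, tailSet, Finset.sum_filter]
  refine Finset.sum_le_sum fun a _ => ?_
  have hnn : ∀ i : Fin K, i ∈ Finset.univ →
      0 ≤ (if k ≤ i.val ∧ a ∈ O i then x a ^ 2 else 0) := by
    intro i _
    split_ifs
    · positivity
    · exact le_rfl
  split_ifs with h
  · obtain ⟨i, hi⟩ := h
    have := Finset.single_le_sum hnn (Finset.mem_univ i)
    rwa [if_pos hi] at this
  · exact Finset.sum_nonneg hnn

/-- One step of the descent through the levels. If `(∑ tᵢ Gᵢ) x` vanishes outside the tail set of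
level `k + 1`, then the part `xL` of `x` outside that set minimises the energy of the levels `≤ k`,
so this energy at `xL` is at most that of the remaining part `xH`. All weights involved on the right
are at most `t k`, and the level `k` alone controls the left side from below, so `t k` cancels. -/
lemma sqOn_tailSet_step {K p : ℕ} (t : Fin K → ℝ) (ht : Monotone t) (htp : ∀ i, 0 < t i)
    (O : Fin K → Finset (Fin p)) (G : Fin K → Matrix (Fin p) (Fin p) ℝ) (μ Ω : ℝ)
    (hμ : 0 < μ) (hΩ : 0 < Ω) (hsymm : ∀ i x y, x ⬝ᵥ G i *ᵥ y = y ⬝ᵥ G i *ᵥ x)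
    (hlow : ∀ i x, μ * sqOn (O i) x ≤ x ⬝ᵥ G i *ᵥ x)
    (hup : ∀ i x, x ⬝ᵥ G i *ᵥ x ≤ Ω * sqOn (O i) x)
    (hzero : ∀ i x y, (∀ a ∈ O i, x a = 0) → x ⬝ᵥ G i *ᵥ y = 0)
    (x : Fin p → ℝ) (k : Fin K)
    (hw : ∀ a ∉ tailSet O (k.val + 1), ((∑ i, t i • G i) *ᵥ x) a = 0) :
    sqOn (tailSet O k.val) x ≤ (1 + K * Ω / μ) * sqOn (tailSet O (k.val + 1)) x := by
  set H := tailSet O (k.val + 1) with hH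
  let xL : Fin p → ℝ := fun a => if a ∈ H then 0 else x a
  let xH : Fin p → ℝ := fun a => if a ∈ H then x a else 0
  have hx : x = xL + xH := by
    funext a
    by_cases h : a ∈ H <;> simp [xL, xH, h]
  have horth : ∑ i, t i * (xL ⬝ᵥ G i *ᵥ x) = 0 := by
    have h1 : xL ⬝ᵥ (∑ i, t i • G i) *ᵥ x = 0 := by
      refine Finset.sum_eq_zero fun a _ => ?_
      by_cases h : a ∈ H
      · simp [xL, h]
      · rw [hw a h, mul_zero]
    rw [← h1, Matrix.sum_mulVec, dotProduct_sum]
    simp [Matrix.smul_mulVec, dotProduct_smul]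
  have hxHsq : ∀ s, sqOn s xH ≤ sqOn H x := by
    intro s
    refine (sqOn_mono (Finset.subset_univ s) xH).trans (le_of_eq ?_)
    simp [sqOn, xH, ite_pow]
  have hterm : ∀ i, t i * (xL ⬝ᵥ G i *ᵥ xL)
      ≤ 2 * (t i * (xL ⬝ᵥ G i *ᵥ x)) + t k * (Ω * sqOn H x) := by
    intro i
    have hnn : 0 ≤ t k * (Ω * sqOn H x) :=
      mul_nonneg (htp k).le (mul_nonneg hΩ.le (sqOn_nonneg _ _))
    by_cases hi : k.val + 1 ≤ i.val
    · have hz : ∀ a ∈ O i, xL a = 0 := by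
        intro a ha
        have : a ∈ H := by
          rw [hH, tailSet, Finset.mem_filter]
          exact ⟨Finset.mem_univ _, i, hi, ha⟩
        simp [xL, this]
      rw [hzero i xL xL hz, hzero i xL x hz]
      simpa using hnn
    · have hik : t i ≤ t k := ht (by rw [Fin.le_def]; omega)
      have hpos : 0 ≤ x ⬝ᵥ G i *ᵥ x :=
        (mul_nonneg hμ.le (sqOn_nonneg _ _)).trans (hlow i x)
      have hcross := hsymm i xH xL
      have hxx : x ⬝ᵥ G i *ᵥ x = xL ⬝ᵥ G i *ᵥ xL + 2 * (xL ⬝ᵥ G i *ᵥ xH)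
          + xH ⬝ᵥ G i *ᵥ xH := by
        rw [hx]
        simp only [Matrix.mulVec_add, dotProduct_add, add_dotProduct]
        linarith
      have hLx : xL ⬝ᵥ G i *ᵥ x = xL ⬝ᵥ G i *ᵥ xL + xL ⬝ᵥ G i *ᵥ xH := by
        conv_lhs => rw [hx]
        simp only [Matrix.mulVec_add, dotProduct_add]
      have h2 : xH ⬝ᵥ G i *ᵥ xH ≤ Ω * sqOn H x :=
        (hup i xH).trans (mul_le_mul_of_nonneg_left (hxHsq _) hΩ.le)
      have h3 : xL ⬝ᵥ G i *ᵥ xL - 2 * (xL ⬝ᵥ G i *ᵥ x) ≤ Ω * sqOn H x := by linarith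
      have h4 := mul_le_mul_of_nonneg_left h3 (htp i).le
      have h5 := mul_le_mul_of_nonneg_right hik (mul_nonneg hΩ.le (sqOn_nonneg H x))
      linarith
  have hsum := Finset.sum_le_sum fun i (_ : i ∈ Finset.univ) => hterm i
  rw [Finset.sum_add_distrib, ← Finset.mul_sum, horth] at hsum
  simp only [mul_zero, zero_add, Finset.sum_const, Finset.card_univ, Fintype.card_fin,
    nsmul_eq_mul] at hsum
  have hone : t k * (xL ⬝ᵥ G k *ᵥ xL) ≤ ∑ i, t i * (xL ⬝ᵥ G i *ᵥ xL) :=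
    Finset.single_le_sum (f := fun i => t i * (xL ⬝ᵥ G i *ᵥ xL))
      (fun i _ => mul_nonneg (htp i).le
        ((mul_nonneg hμ.le (sqOn_nonneg _ _)).trans (hlow i xL))) (Finset.mem_univ k)
  have h6 : t k * (μ * sqOn (O k) xL) ≤ t k * (K * (Ω * sqOn H x)) := by
    have := mul_le_mul_of_nonneg_left (hlow k xL) (htp k).le
    linarith
  have h7 := le_of_mul_le_mul_left h6 (htp k)
  have h8 : sqOn (tailSet O k.val) x ≤ sqOn H x + sqOn (O k) xL := by
    have hsub : tailSet O k.val ⊆ H ∪ (O k).filter (· ∉ H) := by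
      intro a ha
      by_cases haH : a ∈ H
      · exact Finset.mem_union_left _ haH
      · refine Finset.mem_union_right _ (Finset.mem_filter.2 ⟨?_, haH⟩)
        obtain ⟨-, i, hi, hai⟩ := Finset.mem_filter.1 ha
        rcases hi.eq_or_lt with h | h
        · rwa [Fin.ext h]
        · exact absurd (Finset.mem_filter.2 ⟨Finset.mem_univ _, i, h, hai⟩) haH
    refine (sqOn_mono hsub x).trans ?_
    have hdisj : Disjoint H ((O k).filter (· ∉ H)) := by
      rw [Finset.disjoint_left]
      intro a ha hb
      exact (Finset.mem_filter.1 hb).2 ha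
    rw [sqOn, Finset.sum_union hdisj]
    refine add_le_add le_rfl (le_of_eq ?_)
    rw [Finset.sum_filter, sqOn]
    refine Finset.sum_congr rfl fun a _ => ?_
    by_cases h : a ∈ H <;> simp [xL, h]
  have h9 : sqOn (O k) xL ≤ K * Ω / μ * sqOn H x := by
    rw [div_mul_eq_mul_div, le_div_iff₀ hμ]
    linarith
  linarith

/-- Coercivity on the high levels, followed by the descent `sqOn_tailSet_step` to level `0`. -/
lemma sqOn_solution_le {K p : ℕ} (t : Fin K → ℝ) (ht : Monotone t) (htp : ∀ i, 0 < t i)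
    (O : Fin K → Finset (Fin p)) (hO : ∀ j, ∃ i, j ∈ O i)
    (G : Fin K → Matrix (Fin p) (Fin p) ℝ) (μ Ω : ℝ)
    (hμ : 0 < μ) (hΩ : 0 < Ω) (hsymm : ∀ i x y, x ⬝ᵥ G i *ᵥ y = y ⬝ᵥ G i *ᵥ x)
    (hlow : ∀ i x, μ * sqOn (O i) x ≤ x ⬝ᵥ G i *ᵥ x)
    (hup : ∀ i x, x ⬝ᵥ G i *ᵥ x ≤ Ω * sqOn (O i) x)
    (hzero : ∀ i x y, (∀ a ∈ O i, x a = 0) → x ⬝ᵥ G i *ᵥ y = 0)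
    (x : Fin p → ℝ) (l : Fin K)
    (hw : ∀ a ∉ O l, ((∑ i, t i • G i) *ᵥ x) a = 0) :
    sqOn Finset.univ x ≤ (1 + K * Ω / μ) ^ l.val *
      (sqOn Finset.univ ((∑ i, t i • G i) *ᵥ x) / (μ * t l) ^ 2) := by
  set w := (∑ i, t i • G i) *ᵥ x with hwdef
  have hc : 0 ≤ 1 + K * Ω / μ := by positivity
  have hdesc : ∀ k ≤ l.val, sqOn (tailSet O 0) x
      ≤ (1 + K * Ω / μ) ^ k * sqOn (tailSet O k) x := by
    intro k
    induction k with
    | zero => intro _; simp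
    | succ k ih =>
      intro hk
      refine (ih (by omega)).trans ?_
      rw [pow_succ, mul_assoc]
      refine mul_le_mul_of_nonneg_left ?_ (pow_nonneg hc k)
      refine sqOn_tailSet_step t ht htp O G μ Ω hμ hΩ hsymm hlow hup hzero x
        ⟨k, by omega⟩ fun a ha => hw a fun hal => ha ?_
      exact Finset.mem_filter.2 ⟨Finset.mem_univ _, l, hk, hal⟩
  have htail0 : tailSet O 0 = Finset.univ := by
    ext a
    simp [tailSet, hO a]
  have hcoer : μ * t l * sqOn (tailSet O l.val) x ≤ x ⬝ᵥ w := by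
    have h1 : x ⬝ᵥ w = ∑ i, t i * (x ⬝ᵥ G i *ᵥ x) := by
      rw [hwdef, Matrix.sum_mulVec, dotProduct_sum]
      simp [Matrix.smul_mulVec, dotProduct_smul]
    rw [h1]
    refine (mul_le_mul_of_nonneg_left (sqOn_tailSet_le O l.val x)
      (mul_pos hμ (htp l)).le).trans ?_
    rw [Finset.mul_sum]
    refine Finset.sum_le_sum fun i _ => ?_
    have hq := hlow i x
    have hn : 0 ≤ μ * sqOn (O i) x := mul_nonneg hμ.le (sqOn_nonneg _ _)
    split_ifs with h
    · have hli : t l ≤ t i := ht (Fin.le_def.2 h)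
      calc μ * t l * sqOn (O i) x = t l * (μ * sqOn (O i) x) := by ring
        _ ≤ t i * (μ * sqOn (O i) x) := mul_le_mul_of_nonneg_right hli hn
        _ ≤ _ := mul_le_mul_of_nonneg_left hq (htp i).le
    · rw [mul_zero]
      exact mul_nonneg (htp i).le (hn.trans hq)
  have hCS : (x ⬝ᵥ w) ^ 2 ≤ sqOn (tailSet O l.val) x * sqOn Finset.univ w := by
    have h1 : x ⬝ᵥ w = ∑ a ∈ tailSet O l.val, x a * w a := by
      symm
      refine Finset.sum_subset (Finset.subset_univ _) fun a _ ha => ?_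
      rw [hw a fun hal => ha (Finset.mem_filter.2 ⟨Finset.mem_univ _, l, le_rfl, hal⟩), mul_zero]
    rw [h1]
    refine (Finset.sum_mul_sq_le_sq_mul_sq _ _ _).trans ?_
    exact mul_le_mul_of_nonneg_left (sqOn_mono (Finset.subset_univ _) w) (sqOn_nonneg _ _)
  have hhigh : sqOn (tailSet O l.val) x ≤ sqOn Finset.univ w / (μ * t l) ^ 2 := by
    have hpos : 0 < μ * t l := mul_pos hμ (htp l)
    rw [le_div_iff₀ (by positivity)]
    rcases (sqOn_nonneg (tailSet O l.val) x).eq_or_lt with h | h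
    · rw [← h, zero_mul]; exact sqOn_nonneg _ _
    · refine le_of_mul_le_mul_left ?_ h
      have := pow_le_pow_left₀ (mul_nonneg hpos.le h.le) hcoer 2
      nlinarith
  rw [← htail0]
  refine (hdesc l.val le_rfl).trans ?_
  rw [htail0]
  exact mul_le_mul_of_nonneg_left hhigh (pow_nonneg hc _)

/-! ### Euclidean and operator norms -/

lemma eNorm_eq_norm {n : Type*} [Fintype n] (v : n → ℝ) : eNorm v = ‖WithLp.toLp 2 v‖ := by
  simp [eNorm, EuclideanSpace.norm_eq]

lemma eNorm_sq {n : Type*} [Fintype n] (v : n → ℝ) : eNorm v ^ 2 = ∑ i, v i ^ 2 :=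
  Real.sq_sqrt (Finset.sum_nonneg fun _ _ => sq_nonneg _)

lemma eNorm_nonneg {n : Type*} [Fintype n] (v : n → ℝ) : 0 ≤ eNorm v := Real.sqrt_nonneg _

open scoped Matrix.Norms.L2Operator in
lemma opNorm_eq_norm {m n : Type*} [Fintype m] [Fintype n] [DecidableEq n]
    (A : Matrix m n ℝ) : opNorm A = ‖A‖ := by
  rw [Matrix.l2_opNorm_def, ContinuousLinearMap.norm_def, opNorm]
  congr 1
  ext c
  simp only [Set.mem_ofPred_eq, eNorm_eq_norm]
  refine and_congr_right fun _ => ⟨fun h x => h x.ofLp, fun h x => h (WithLp.toLp 2 x)⟩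

lemma opNorm_transpose_mul_self {m n : Type*} [Fintype m] [Fintype n] [DecidableEq n]
    (A : Matrix m n ℝ) : opNorm (Aᵀ * A) = opNorm A ^ 2 := by
  rw [opNorm_eq_norm, opNorm_eq_norm, sq, ← Matrix.l2_opNorm_conjTranspose_mul_self,
    Matrix.conjTranspose_eq_transpose_of_trivial]

lemma opNorm_sq_le {m n : Type*} [Fintype m] [Fintype n] (A : Matrix m n ℝ) (c : ℝ)
    (hc : 0 ≤ c) (h : ∀ x, eNorm (A *ᵥ x) ^ 2 ≤ c * eNorm x ^ 2) : opNorm A ^ 2 ≤ c := by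
  have h1 : opNorm A ≤ Real.sqrt c := by
    refine csInf_le ⟨0, fun _ h => h.1⟩ ⟨Real.sqrt_nonneg _, fun x => ?_⟩
    refine le_of_sq_le_sq ?_ (mul_nonneg (Real.sqrt_nonneg _) (eNorm_nonneg x))
    rw [mul_pow, Real.sq_sqrt hc]
    exact h x
  have h0 : 0 ≤ opNorm A := Real.sInf_nonneg fun _ h => h.1
  calc opNorm A ^ 2 ≤ Real.sqrt c ^ 2 := pow_le_pow_left₀ h0 h1 2
    _ = c := Real.sq_sqrt hc

/-! ### Extreme eigenvalues -/

/-- The Rayleigh quotients of a matrix form a compact set, the image of the unit sphere. -/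
lemma isCompact_rayleigh {n : Type*} [Fintype n] (A : Matrix n n ℝ) :
    IsCompact {r : ℝ | ∃ x : n → ℝ, eNorm x = 1 ∧ r = x ⬝ᵥ A.mulVec x} := by
  have h : {r : ℝ | ∃ x : n → ℝ, eNorm x = 1 ∧ r = x ⬝ᵥ A.mulVec x}
      = (fun x : EuclideanSpace ℝ n => x.ofLp ⬝ᵥ A *ᵥ x.ofLp) '' Metric.sphere 0 1 := by
    ext r
    simp only [Set.mem_ofPred_eq, Set.mem_image, mem_sphere_zero_iff_norm, eNorm_eq_norm]
    constructor
    · rintro ⟨x, hx, rfl⟩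
      exact ⟨WithLp.toLp 2 x, hx, rfl⟩
    · rintro ⟨x, hx, rfl⟩
      exact ⟨x.ofLp, hx, rfl⟩
  rw [h]
  refine (isCompact_sphere _ _).image ?_
  simp only [dotProduct, Matrix.mulVec]
  fun_prop

lemma lam_bounds {p : ℕ} (hp : 1 ≤ p) (A : Matrix (Fin p) (Fin p) ℝ) (hA : A.PosDef) :
    0 < lamMin A ∧ lamMin A ≤ lamMax A := by
  have hne : {r : ℝ | ∃ x : Fin p → ℝ, eNorm x = 1 ∧ r = x ⬝ᵥ A.mulVec x}.Nonempty := by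
    refine ⟨_, Pi.single ⟨0, hp⟩ 1, ?_, rfl⟩
    simp [eNorm_eq_norm]
  have hc := isCompact_rayleigh A
  constructor
  · obtain ⟨x, hx, hr⟩ := hc.sInf_mem hne
    rw [lamMin, hr]
    have hx0 : x ≠ 0 := by
      rintro rfl
      simp [eNorm] at hx
    simpa using hA.dotProduct_mulVec_pos hx0
  · exact csInf_le_csSup hne hc.bddBelow hc.bddAbove

lemma lamMin_mul_le {n : Type*} [Fintype n] (A : Matrix n n ℝ) (x : n → ℝ) :
    lamMin A * eNorm x ^ 2 ≤ x ⬝ᵥ A *ᵥ x := by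
  rcases eq_or_ne (eNorm x) 0 with h | h
  · have hx : x = 0 := by
      rw [eNorm_eq_norm, norm_eq_zero] at h
      simpa using h
    simp [hx, eNorm]
  · have hpos : 0 < eNorm x := lt_of_le_of_ne (eNorm_nonneg x) h.symm
    have hle : lamMin A ≤ ((eNorm x)⁻¹ • x) ⬝ᵥ A *ᵥ ((eNorm x)⁻¹ • x) := by
      refine csInf_le (isCompact_rayleigh A).bddBelow ⟨_, ?_, rfl⟩
      rw [eNorm_eq_norm, WithLp.toLp_smul, norm_smul, ← eNorm_eq_norm, Real.norm_eq_abs,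
        abs_of_pos (inv_pos.2 hpos), inv_mul_cancel₀ h]
    have := mul_le_mul_of_nonneg_right hle (sq_nonneg (eNorm x))
    refine this.trans (le_of_eq ?_)
    simp only [Matrix.mulVec_smul, dotProduct_smul, smul_dotProduct, smul_eq_mul]
    field_simp

/-- A positive definite matrix stretches every vector by at least its smallest eigenvalue. -/
lemma lamMin_sq_mul_le {p : ℕ} (hp : 1 ≤ p) (A : Matrix (Fin p) (Fin p) ℝ) (hA : A.PosDef)
    (x : Fin p → ℝ) : lamMin A ^ 2 * eNorm x ^ 2 ≤ eNorm (A *ᵥ x) ^ 2 := by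
  have hpos := (lam_bounds hp A hA).1
  have h1 := lamMin_mul_le A x
  have hCS : (x ⬝ᵥ A *ᵥ x) ^ 2 ≤ eNorm x ^ 2 * eNorm (A *ᵥ x) ^ 2 := by
    rw [eNorm_sq, eNorm_sq]
    exact Finset.sum_mul_sq_le_sq_mul_sq _ _ _
  rcases (sq_nonneg (eNorm x)).eq_or_lt with h | h
  · rw [← h, mul_zero]; positivity
  · refine le_of_mul_le_mul_left ?_ h
    have := pow_le_pow_left₀ (mul_nonneg hpos.le h.le) h1 2
    nlinarith

/-! ### The constant -/

/-- The numerical comparison behind the constant `(K + 1) ^ K`. -/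
lemma const_le {K l : ℕ} (hl : l < K) {μ Ω : ℝ} (hμ : 0 < μ) (hΩ : 0 < Ω) :
    (1 + K * Ω / μ) ^ l / μ ^ 2
      ≤ ((K : ℝ) + 1) ^ K * max 1 (Ω ^ (2 * K)) / min (μ ^ (2 * K)) 1 := by
  set a := max 1 Ω with ha
  set b := min μ 1 with hb
  have ha1 : 1 ≤ a := le_max_left _ _
  have hb1 : b ≤ 1 := min_le_right _ _
  have hb0 : 0 < b := lt_min hμ one_pos
  have hbμ : b ≤ μ := min_le_left _ _
  have hmax : a ^ (2 * K) = max 1 (Ω ^ (2 * K)) := by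
    rcases le_total 1 Ω with h | h
    · rw [ha, max_eq_right h, max_eq_right (one_le_pow₀ h)]
    · rw [ha, max_eq_left h, one_pow, max_eq_left (pow_le_one₀ hΩ.le h)]
  have hmin : b ^ (2 * K) = min (μ ^ (2 * K)) 1 := by
    rcases le_total 1 μ with h | h
    · rw [hb, min_eq_right h, one_pow, min_eq_right (one_le_pow₀ h)]
    · rw [hb, min_eq_left h, min_eq_left (pow_le_one₀ hμ.le h)]
  rw [← hmax, ← hmin]
  have hbase : 1 + K * Ω / μ ≤ (K + 1) * a / b := by
    have h1 : (1 : ℝ) ≤ a / b := (one_le_div hb0).2 (hb1.trans ha1)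
    have h2 : Ω / μ ≤ a / b := div_le_div₀ (by linarith) (le_max_right _ _) hb0 hbμ
    have h3 := mul_le_mul_of_nonneg_left h2 (Nat.cast_nonneg (α := ℝ) K)
    rw [mul_div_assoc, mul_div_assoc]
    linarith
  calc (1 + K * Ω / μ) ^ l / μ ^ 2 ≤ ((K + 1) * a / b) ^ l / b ^ 2 := by
        have : 0 ≤ 1 + K * Ω / μ := by positivity
        gcongr
    _ = ((K : ℝ) + 1) ^ l * a ^ l / b ^ (l + 2) := by
        rw [div_pow, mul_pow, div_div, ← pow_add]
    _ ≤ ((K : ℝ) + 1) ^ K * a ^ (2 * K) / b ^ (2 * K) := by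
        have hK : (1 : ℝ) ≤ K + 1 := by
          have := Nat.cast_nonneg (α := ℝ) K
          linarith
        refine div_le_div₀ (by positivity) ?_ (by positivity)
          (pow_le_pow_of_le_one hb0.le hb1 (by omega))
        exact mul_le_mul (pow_le_pow_right₀ hK hl.le) (pow_le_pow_right₀ ha1 (by omega))
          (by positivity) (by positivity)

/-! ### Coordinate inclusions -/

/-- The matrix whose columns are the standard basis vectors indexed by `s`. -/
def incl {p : ℕ} (s : Finset (Fin p)) : Matrix (Fin p) s ℝ :=
  (1 : Matrix (Fin p) (Fin p) ℝ).submatrix id Subtype.val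

lemma incl_transpose_mulVec {p : ℕ} (s : Finset (Fin p)) (x : Fin p → ℝ) :
    (incl s)ᵀ *ᵥ x = fun a : s => x a.val := by
  funext a
  simp [incl, Matrix.mulVec, dotProduct, Matrix.one_apply]

lemma incl_sandwich {p : ℕ} (s : Finset (Fin p)) (C : Matrix s s ℝ) (x y : Fin p → ℝ) :
    x ⬝ᵥ (incl s * C * (incl s)ᵀ) *ᵥ y
      = (fun a : s => x a) ⬝ᵥ C *ᵥ (fun a : s => y a) := by
  rw [← Matrix.mulVec_mulVec, ← Matrix.mulVec_mulVec, incl_transpose_mulVec,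
    Matrix.dotProduct_mulVec, ← Matrix.mulVec_transpose, incl_transpose_mulVec]

lemma eNorm_incl_mulVec {p : ℕ} (s : Finset (Fin p)) (v : s → ℝ) :
    (∀ a ∉ s, (incl s *ᵥ v) a = 0) ∧ eNorm (incl s *ᵥ v) ^ 2 = eNorm v ^ 2 := by
  have hval : ∀ a (h : a ∈ s), (incl s *ᵥ v) a = v ⟨a, h⟩ := by
    intro a h
    rw [Matrix.mulVec, dotProduct, Finset.sum_eq_single ⟨a, h⟩]
    · change (1 : Matrix (Fin p) (Fin p) ℝ) a a * v ⟨a, h⟩ = v ⟨a, h⟩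
      rw [Matrix.one_apply_eq, one_mul]
    · intro b _ hb
      have : a ≠ b.val := fun e => hb (Subtype.ext e.symm)
      simp [incl, this]
    · simp
  have hz : ∀ a ∉ s, (incl s *ᵥ v) a = 0 := by
    intro a h
    refine Finset.sum_eq_zero fun b _ => ?_
    have : a ≠ b.val := fun e => h (e ▸ b.2)
    simp [incl, this]
  refine ⟨hz, ?_⟩
  rw [eNorm_sq, eNorm_sq, ← Finset.sum_subset (Finset.subset_univ s)
    (fun a _ h => by rw [hz a h]; simp), ← Finset.sum_coe_sort s]
  refine Finset.sum_congr rfl fun a _ => ?_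
  rw [hval a a.2]

/-! ### The bound for `S⁻¹ R_l` -/

theorem stmt0 :
    ∃ F : ℕ → ℝ,
      ∀ (K p : ℕ), 1 ≤ K → 1 ≤ p →
      ∀ (t : Fin K → ℝ), Monotone t → (∀ i, 0 < t i) →
      ∀ (O : Fin K → Finset (Fin p)), (∀ i, (O i).Nonempty) →
        (∀ j : Fin p, ∃ i, j ∈ O i) →
      ∀ (Sig : Matrix (Fin p) (Fin p) ℝ), Sig.PosDef →
      ∀ (C : (i : Fin K) → Matrix (↥(O i)) (↥(O i)) ℝ) (μC ΩC : ℝ),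
        0 < μC → 0 < ΩC →
        (∀ i, (C i).PosDef) →
        (∀ i, Loewner (μC • (1 : Matrix (↥(O i)) (↥(O i)) ℝ)) (C i)) →
        (∀ i, Loewner (C i) (ΩC • (1 : Matrix (↥(O i)) (↥(O i)) ℝ))) →
        -- `R i` consists of the columns of `Σ` indexed by `O i`, i.e. `R i = (Σ_{O_i})ᵀ`
        (let R : (i : Fin K) → Matrix (Fin p) (↥(O i)) ℝ :=
          fun i => Sig.submatrix id Subtype.val
        let S : Matrix (Fin p) (Fin p) ℝ :=
          ∑ i, t i • (R i * C i * (R i)ᵀ)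
        IsUnit S.det ∧
        ∀ l : Fin K,
          opNorm ((R l)ᵀ * (S⁻¹ * S⁻¹) * R l) = (opNorm (S⁻¹ * R l)) ^ 2 ∧
          (opNorm (S⁻¹ * R l)) ^ 2 ≤
            F K * (lamMax Sig ^ 6 / lamMin Sig ^ 8) *
              max 1 (ΩC ^ (2 * K)) / (t l ^ 2 * min (μC ^ (2 * K)) 1)) := by
  refine ⟨fun K => ((K : ℝ) + 1) ^ K, ?_⟩
  intro K p hK hp t ht htp O _ hO Sig hSig C μC ΩC hμ hΩ hC hlow hup R S
  have hSigT : Sigᵀ = Sig := by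
    rw [← Matrix.conjTranspose_eq_transpose_of_trivial]
    exact hSig.isHermitian
  have hCT : ∀ i, (C i)ᵀ = C i := by
    intro i
    rw [← Matrix.conjTranspose_eq_transpose_of_trivial]
    exact (hC i).isHermitian
  have hR : ∀ i, R i = Sig * incl (O i) := by
    intro i
    ext a b
    simp [R, incl, Matrix.mul_apply, Matrix.one_apply]
  set G : Fin K → Matrix (Fin p) (Fin p) ℝ := fun i => incl (O i) * C i * (incl (O i))ᵀ with hG
  set M := ∑ i, t i • G i with hM
  have hS : S = Sig * M * Sig := by
    simp only [S, hM, Finset.mul_sum, Finset.sum_mul]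
    refine Finset.sum_congr rfl fun i _ => ?_
    rw [hR i, Matrix.transpose_mul, hSigT, Matrix.mul_smul, Matrix.smul_mul]
    simp only [hG, Matrix.mul_assoc]
  have hrestr : ∀ (s : Finset (Fin p)) (x : Fin p → ℝ),
      (fun a : s => x a) ⬝ᵥ (fun a : s => x a) = sqOn s x := by
    intro s x
    rw [sqOn, ← Finset.sum_coe_sort s]
    exact Finset.sum_congr rfl fun a _ => (sq _).symm
  have key := sqOn_solution_le t ht htp O hO G μC ΩC hμ hΩ
    (fun i x y => by
      simp only [hG, incl_sandwich]
      rw [Matrix.dotProduct_mulVec, ← Matrix.mulVec_transpose, hCT, dotProduct_comm])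
    (fun i x => by
      simp only [hG, incl_sandwich]
      have := hlow i fun a => x a
      simpa [Matrix.smul_mulVec, dotProduct_smul, hrestr] using this)
    (fun i x => by
      simp only [hG, incl_sandwich]
      have := hup i fun a => x a
      simpa [Matrix.smul_mulVec, dotProduct_smul, hrestr] using this)
    (fun i x y h => by
      simp only [hG, incl_sandwich]
      refine Finset.sum_eq_zero fun a _ => ?_
      simp [h a.1 a.2])
  rw [← hM] at key
  have hMunit : IsUnit M := by
    rw [← Matrix.mulVec_injective_iff_isUnit]
    -- The estimate with zero right-hand side shows that `M` has trivial kernel.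
    refine (injective_iff_map_eq_zero M.mulVecLin).2 fun x hx => ?_
    rw [Matrix.mulVecLin_apply] at hx
    have h := key x ⟨0, hK⟩ fun a _ => by rw [hx]; rfl
    rw [hx] at h
    have h0 : sqOn Finset.univ x = 0 :=
      le_antisymm (by simpa [sqOn] using h) (sqOn_nonneg _ _)
    funext a
    have := (Finset.sum_eq_zero_iff_of_nonneg fun _ _ => sq_nonneg _).1 h0 a (Finset.mem_univ a)
    simpa using this
  have hSigunit : IsUnit Sig := hSig.isUnit
  have hSunit : IsUnit S := by
    rw [hS]
    exact (hSigunit.mul hMunit).mul hSigunit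
  have hSdet : IsUnit S.det := (Matrix.isUnit_iff_isUnit_det S).1 hSunit
  refine ⟨hSdet, fun l => ⟨?_, ?_⟩⟩
  · have hST : Sᵀ = S := by
      simp only [S, Matrix.transpose_sum, Matrix.transpose_smul, Matrix.transpose_mul,
        Matrix.transpose_transpose, hCT, Matrix.mul_assoc]
    rw [← opNorm_transpose_mul_self, Matrix.transpose_mul, Matrix.transpose_nonsing_inv, hST]
    simp only [Matrix.mul_assoc]
  · obtain ⟨hmin, hmm⟩ := lam_bounds hp Sig hSig
    have htl := htp l
    set D := (1 + K * ΩC / μC) ^ l.val / μC ^ 2 with hD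
    have hDnn : 0 ≤ D := by positivity
    have hbound : opNorm (S⁻¹ * R l) ^ 2 ≤ D / t l ^ 2 / lamMin Sig ^ 2 := by
      refine opNorm_sq_le _ _ (by positivity) fun v => ?_
      set z := (S⁻¹ * R l) *ᵥ v with hz
      -- `S z = R v` reads `Σ M Σ z = Σ E v`, and `Σ` cancels on the left.
      have h1 : M *ᵥ (Sig *ᵥ z) = incl (O l) *ᵥ v := by
        have h2 : S *ᵥ z = R l *ᵥ v := by
          rw [hz, Matrix.mulVec_mulVec, Matrix.mul_nonsing_inv_cancel_left _ _ hSdet]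
        rw [hS, hR, ← Matrix.mulVec_mulVec, ← Matrix.mulVec_mulVec,
          ← Matrix.mulVec_mulVec] at h2
        exact Matrix.mulVec_injective_iff_isUnit.2 hSigunit h2
      obtain ⟨hsupp, hnorm⟩ := eNorm_incl_mulVec (O l) v
      have h3 := key (Sig *ᵥ z) l (by rw [h1]; exact hsupp)
      rw [h1, sqOn, sqOn, ← eNorm_sq, ← eNorm_sq, hnorm] at h3
      have h4 := (lamMin_sq_mul_le hp Sig hSig z).trans h3
      rw [div_mul_eq_mul_div, le_div_iff₀ (by positivity), mul_comm]
      refine h4.trans (le_of_eq ?_)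
      rw [hD]
      field_simp
    have hconst := const_le l.isLt hμ hΩ
    rw [← hD] at hconst
    have hlam : 1 / lamMin Sig ^ 2 ≤ lamMax Sig ^ 6 / lamMin Sig ^ 8 := by
      rw [div_le_div_iff₀ (by positivity) (by positivity)]
      have := pow_le_pow_left₀ hmin.le hmm 6
      nlinarith [sq_nonneg (lamMin Sig)]
    calc opNorm (S⁻¹ * R l) ^ 2 ≤ D / t l ^ 2 / lamMin Sig ^ 2 := hbound
      _ = D * (1 / lamMin Sig ^ 2) / t l ^ 2 := by ring
      _ ≤ (((K : ℝ) + 1) ^ K * max 1 (ΩC ^ (2 * K)) / min (μC ^ (2 * K)) 1)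
            * (lamMax Sig ^ 6 / lamMin Sig ^ 8) / t l ^ 2 := by
          have := hDnn.trans hconst
          gcongr
      _ = _ := by
          have hm : (0 : ℝ) < min (μC ^ (2 * K)) 1 := lt_min (by positivity) one_pos
          field_simp
end

section
/- Let p ≥ 1 and 1 ≤ s ≤ p be integers, let Φ_Σ > 0 and λ > 0. Let Σ, Σ̂ ∈ ℝ^{p×p}, γ̂ ∈ ℝ^p and β* ∈ ℝ^p with ‖β*‖₀ ≤ s. Assume ‖γ̂ − Σβ*‖_∞ ≤ λ/2, ‖Σ̂β* − Σβ*‖_∞ ≤ λ/2, and that Σ̂ satisfies Re(s, Φ_Σ/2). Let β̂ be any minimizer of ‖β‖₁ over the set {β ∈ ℝ^p : ‖Σ̂β − γ̂‖_∞ ≤ λ}. Then ‖β̂ − β*‖₂ ≤ 16 λ √s / Φ_Σ. -/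
/-!
Put `δ = betaHat - betaStar` and let `S` be the support of `betaStar`. The two sup-norm hypotheses
make `betaStar` feasible, so minimality of `betaHat` puts `δ` in the cone `‖δ_{Sᶜ}‖₁ ≤ ‖δ_S‖₁`
(`cone_of_l1_le`), and feasibility of both vectors gives `‖Σ̂ δ‖_∞ ≤ 2λ`. Hence
`δᵀ Σ̂ δ ≤ 2λ ‖δ‖₁ ≤ 4λ ‖δ_S‖₁ ≤ 4λ √s ‖δ_M‖₂` with `M = M(δ)`, and the restricted eigenvalue
condition yields `‖δ_M‖₂ ≤ 8λ √s / Φ`.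

To pass from `δ_M` to `δ`: every coordinate outside `M` is dominated by `s` coordinates of `Sᶜ`,
so it is at most `‖δ_{Sᶜ}‖₁ / s` (`mul_abs_le_of_notMem_Mset`). Therefore
`‖δ_{Mᶜ}‖₂² ≤ ‖δ_{Sᶜ}‖₁² / s ≤ ‖δ_S‖₁² / s ≤ ‖δ_M‖₂²`, so `‖δ‖₂² ≤ 2 ‖δ_M‖₂²`
(`sum_sq_le_of_cone`); since `√2 ≤ 2` this is enough.
-/

open Matrix BigOperators

/-- ℓ¹ norm. -/
noncomputable def l1 {p : ℕ} (v : Fin p → ℝ) : ℝ := ∑ i, |v i|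

/-- ℓ^∞ norm. -/
noncomputable def linf {p : ℕ} (v : Fin p → ℝ) : ℝ := ⨆ i, |v i|

/-- ℓ⁰ "norm": number of nonzero entries. -/
noncomputable def l0 {p : ℕ} (v : Fin p → ℝ) : ℕ :=
  (Finset.univ.filter (fun i => v i ≠ 0)).card

/-- Restriction of a vector to a set of coordinates (zero outside the set). -/
def restrict {p : ℕ} (T : Finset (Fin p)) (δ : Fin p → ℝ) : Fin p → ℝ :=
  fun i => if i ∈ T then δ i else 0

/-- The `k`-th largest value among `{|δ i| : i ∈ T}` (counted with multiplicity),
characterised as the supremum of thresholds `t` for which at least `k` entries of `|δ|`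
on `T` are `≥ t`. -/
noncomputable def kthLargest {p : ℕ} (T : Finset (Fin p)) (δ : Fin p → ℝ) (k : ℕ) : ℝ :=
  sSup {t : ℝ | k ≤ (T.filter (fun i => t ≤ |δ i|)).card}

/-- The set `M(δ) = S ∪ {i ∈ Sᶜ : |δ i| ≥ |δ_{Sᶜ}|_(min{s,|Sᶜ|})}`. -/
noncomputable def Mset {p : ℕ} (S : Finset (Fin p)) (s : ℕ) (δ : Fin p → ℝ) : Finset (Fin p) :=
  S ∪ (Sᶜ.filter (fun i => kthLargest Sᶜ δ (min s Sᶜ.card) ≤ |δ i|))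

/-- The restricted eigenvalue quantity `φ²(A, s)`. -/
noncomputable def phiSq {p : ℕ} (A : Matrix (Fin p) (Fin p) ℝ) (s : ℕ) : ℝ :=
  sInf {r : ℝ | ∃ (S : Finset (Fin p)) (δ : Fin p → ℝ),
    S.card ≤ s ∧ δ ≠ 0 ∧ l1 (restrict Sᶜ δ) ≤ l1 (restrict S δ) ∧
    r = (δ ⬝ᵥ A.mulVec δ) / (eNorm (restrict (Mset S s δ) δ)) ^ 2}

/-- The restricted eigenvalue condition `Re(s, Φ)`. -/
def Re {p : ℕ} (A : Matrix (Fin p) (Fin p) ℝ) (s : ℕ) (Φ : ℝ) : Prop :=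
  Φ ≤ phiSq A s

lemma abs_le_of_linf_le {p : ℕ} {v : Fin p → ℝ} {c : ℝ} (h : linf v ≤ c) (i : Fin p) :
    |v i| ≤ c :=
  (le_ciSup (f := fun i => |v i|) (Set.finite_range _).bddAbove i).trans h

lemma l1_restrict {p : ℕ} (T : Finset (Fin p)) (δ : Fin p → ℝ) :
    l1 (restrict T δ) = ∑ i ∈ T, |δ i| := by
  simp [l1, restrict, apply_ite, Finset.sum_ite_mem]

lemma eNorm_restrict_sq {p : ℕ} (T : Finset (Fin p)) (δ : Fin p → ℝ) :
    (eNorm (restrict T δ)) ^ 2 = ∑ i ∈ T, (δ i) ^ 2 := by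
  rw [eNorm, Real.sq_sqrt (Finset.sum_nonneg fun i _ => sq_nonneg _)]
  simp [restrict, ite_pow, Finset.sum_ite_mem]

/-- A vector of `ℓ¹` norm at most that of `b` differs from `b` by an element of the cone attached to
any set containing the support of `b`. -/
lemma cone_of_l1_le {p : ℕ} (S : Finset (Fin p)) (a b : Fin p → ℝ)
    (hb : ∀ i ∉ S, b i = 0) (h : l1 a ≤ l1 b) :
    ∑ i ∈ Sᶜ, |(a - b) i| ≤ ∑ i ∈ S, |(a - b) i| := by
  unfold l1 at h
  rw [← Finset.sum_add_sum_compl S, ← Finset.sum_add_sum_compl S (fun i => |b i|)] at h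
  have e1 : ∑ i ∈ Sᶜ, |b i| = 0 :=
    Finset.sum_eq_zero fun i hi => by simp [hb i (Finset.mem_compl.1 hi)]
  have e2 : ∑ i ∈ Sᶜ, |(a - b) i| = ∑ i ∈ Sᶜ, |a i| :=
    Finset.sum_congr rfl fun i hi => by simp [hb i (Finset.mem_compl.1 hi)]
  have e3 : ∑ i ∈ S, |b i| ≤ ∑ i ∈ S, |a i| + ∑ i ∈ S, |(a - b) i| := by
    rw [← Finset.sum_add_distrib]
    refine Finset.sum_le_sum fun i _ => ?_
    have := abs_sub (a i) (a i - b i)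
    simpa using this
  linarith

lemma mul_abs_le_of_notMem_Mset {p : ℕ} (S : Finset (Fin p)) (s : ℕ) (δ : Fin p → ℝ) (i : Fin p)
    (hi : i ∉ Mset S s δ) : s * |δ i| ≤ ∑ j ∈ Sᶜ, |δ j| := by
  simp only [Mset, Finset.mem_union, Finset.mem_filter, not_or, not_and, not_le] at hi
  obtain ⟨hiS, hlt⟩ := hi
  have hiS' : i ∈ Sᶜ := Finset.mem_compl.2 hiS
  obtain ⟨t, ht, hit⟩ := exists_lt_of_lt_csSup (⟨0, by simp⟩ : Set.Nonempty _) (hlt hiS')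
  simp only [Set.mem_ofPred_eq] at ht
  -- The threshold `t` excludes `i`, so fewer than `|Sᶜ|` entries reach it and the minimum is `s`.
  have hcard : (Sᶜ.filter (fun j => t ≤ |δ j|)).card < Sᶜ.card :=
    Finset.card_lt_card ((Finset.filter_ssubset).2 ⟨i, hiS', not_le.2 hit⟩)
  have hs : s ≤ (Sᶜ.filter (fun j => t ≤ |δ j|)).card := by omega
  calc (s : ℝ) * |δ i| ≤ (Sᶜ.filter (fun j => t ≤ |δ j|)).card * |δ i| := by gcongr
    _ = ∑ j ∈ Sᶜ.filter (fun j => t ≤ |δ j|), |δ i| := by simp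
    _ ≤ ∑ j ∈ Sᶜ.filter (fun j => t ≤ |δ j|), |δ j| :=
        Finset.sum_le_sum fun j hj => hit.le.trans (Finset.mem_filter.1 hj).2
    _ ≤ ∑ j ∈ Sᶜ, |δ j| :=
        Finset.sum_le_sum_of_subset_of_nonneg (Finset.filter_subset _ _)
          fun j _ _ => abs_nonneg _

/-- `‖δ_S‖₁² ≤ s ‖δ_M‖₂²`, by Cauchy–Schwarz and `S ⊆ M`. -/
lemma sq_sum_abs_le {p : ℕ} (S : Finset (Fin p)) (s : ℕ) (δ : Fin p → ℝ) (hS : S.card ≤ s) :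
    (∑ i ∈ S, |δ i|) ^ 2 ≤ s * ∑ i ∈ Mset S s δ, (δ i) ^ 2 := by
  calc (∑ i ∈ S, |δ i|) ^ 2 ≤ S.card * ∑ i ∈ S, |δ i| ^ 2 := sq_sum_le_card_mul_sum_sq
    _ = S.card * ∑ i ∈ S, (δ i) ^ 2 := by simp
    _ ≤ s * ∑ i ∈ Mset S s δ, (δ i) ^ 2 := by
        gcongr
        exact Finset.subset_union_left

lemma sum_sq_le_of_cone {p : ℕ} (S : Finset (Fin p)) (s : ℕ) (hs1 : 1 ≤ s) (δ : Fin p → ℝ)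
    (hS : S.card ≤ s) (hc : ∑ i ∈ Sᶜ, |δ i| ≤ ∑ i ∈ S, |δ i|) :
    ∑ i, (δ i) ^ 2 ≤ 2 * ∑ i ∈ Mset S s δ, (δ i) ^ 2 := by
  set b := ∑ i ∈ Sᶜ, |δ i| with hb
  have hs0 : (0 : ℝ) < s := by exact_mod_cast hs1
  have hb0 : 0 ≤ b := Finset.sum_nonneg fun i _ => abs_nonneg _
  have h1 : s * ∑ i ∈ (Mset S s δ)ᶜ, (δ i) ^ 2 ≤ b * b := by
    calc s * ∑ i ∈ (Mset S s δ)ᶜ, (δ i) ^ 2 = ∑ i ∈ (Mset S s δ)ᶜ, (s * |δ i|) * |δ i| := by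
          rw [Finset.mul_sum]
          refine Finset.sum_congr rfl fun i _ => ?_
          rw [← sq_abs]; ring
      _ ≤ ∑ i ∈ (Mset S s δ)ᶜ, b * |δ i| :=
          Finset.sum_le_sum fun i hi => mul_le_mul_of_nonneg_right
            (mul_abs_le_of_notMem_Mset S s δ i (Finset.mem_compl.1 hi)) (abs_nonneg _)
      _ = b * ∑ i ∈ (Mset S s δ)ᶜ, |δ i| := by rw [Finset.mul_sum]
      _ ≤ b * b := by
          refine mul_le_mul_of_nonneg_left ?_ hb0
          exact Finset.sum_le_sum_of_subset_of_nonneg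
            (Finset.compl_subset_compl.2 Finset.subset_union_left) fun j _ _ => abs_nonneg _
  have h2 := sq_sum_abs_le S s δ hS
  have h3 : s * ∑ i ∈ (Mset S s δ)ᶜ, (δ i) ^ 2 ≤ s * ∑ i ∈ Mset S s δ, (δ i) ^ 2 := by
    nlinarith
  have h4 := le_of_mul_le_mul_left h3 hs0
  rw [← Finset.sum_add_sum_compl (Mset S s δ)]
  linarith

/-- The restricted eigenvalue condition in product form. Positivity of `Φ` is what rules out the
junk value `sInf = 0` of a set unbounded below. -/
lemma Re.mul_le {p : ℕ} {A : Matrix (Fin p) (Fin p) ℝ} {s : ℕ} {Φ : ℝ} (h : Re A s Φ)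
    (hΦ : 0 < Φ) (S : Finset (Fin p)) (δ : Fin p → ℝ) (hS : S.card ≤ s)
    (hc : ∑ i ∈ Sᶜ, |δ i| ≤ ∑ i ∈ S, |δ i|) (hpos : 0 < ∑ i ∈ Mset S s δ, (δ i) ^ 2) :
    Φ * ∑ i ∈ Mset S s δ, (δ i) ^ 2 ≤ δ ⬝ᵥ A.mulVec δ := by
  rw [← le_div_iff₀ hpos]
  unfold Re phiSq at h
  refine h.trans (csInf_le ?_ ⟨S, δ, hS, ?_, ?_, ?_⟩)
  · by_contra hbdd
    rw [Real.sInf_of_not_bddBelow hbdd] at h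
    linarith
  · rintro rfl
    simp at hpos
  · rwa [l1_restrict, l1_restrict]
  · rw [eNorm_restrict_sq]

theorem stmt3 (p s : ℕ) (hp : 1 ≤ p) (hs1 : 1 ≤ s) (hsp : s ≤ p)
    (PhiSig lam : ℝ) (hPhi : 0 < PhiSig) (hlam : 0 < lam)
    (Sig SigHat : Matrix (Fin p) (Fin p) ℝ) (gamHat betaStar : Fin p → ℝ)
    (hsparse : l0 betaStar ≤ s)
    (h1 : linf (gamHat - Sig.mulVec betaStar) ≤ lam / 2)
    (h2 : linf (SigHat.mulVec betaStar - Sig.mulVec betaStar) ≤ lam / 2)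
    (hRe : Re SigHat s (PhiSig / 2))
    (betaHat : Fin p → ℝ)
    (hfeas : linf (SigHat.mulVec betaHat - gamHat) ≤ lam)
    (hmin : ∀ β : Fin p → ℝ, linf (SigHat.mulVec β - gamHat) ≤ lam → l1 betaHat ≤ l1 β) :
    eNorm (betaHat - betaStar) ≤ 16 * lam * Real.sqrt s / PhiSig := by
  set δ := betaHat - betaStar with hδ
  set S := Finset.univ.filter (fun i => betaStar i ≠ 0) with hSdef
  have hS : S.card ≤ s := hsparse
  have hstar : ∀ i, |(SigHat.mulVec betaStar - gamHat) i| ≤ lam := by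
    intro i
    have a1 := abs_le.1 (abs_le_of_linf_le h1 i)
    have a2 := abs_le.1 (abs_le_of_linf_le h2 i)
    simp only [Pi.sub_apply] at a1 a2 ⊢
    rw [abs_le]
    constructor <;> linarith
  have hc : ∑ i ∈ Sᶜ, |δ i| ≤ ∑ i ∈ S, |δ i| :=
    cone_of_l1_le S betaHat betaStar (fun i hi => by simpa [hSdef] using hi)
      (hmin betaStar (Real.iSup_le hstar hlam.le))
  have hinf : ∀ i, |(SigHat.mulVec δ) i| ≤ 2 * lam := by
    intro i
    have a1 := abs_le.1 (abs_le_of_linf_le hfeas i)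
    have a2 := abs_le.1 (hstar i)
    rw [hδ, Matrix.mulVec_sub]
    simp only [Pi.sub_apply] at a1 a2 ⊢
    rw [abs_le]
    constructor <;> linarith
  have hquad : δ ⬝ᵥ SigHat.mulVec δ ≤ 4 * lam * ∑ i ∈ S, |δ i| := by
    calc δ ⬝ᵥ SigHat.mulVec δ ≤ ∑ i, |δ i| * (2 * lam) := by
          refine Finset.sum_le_sum fun i _ => ?_
          calc δ i * (SigHat.mulVec δ) i ≤ |δ i| * |(SigHat.mulVec δ) i| := by
                rw [← abs_mul]; exact le_abs_self _
            _ ≤ |δ i| * (2 * lam) := mul_le_mul_of_nonneg_left (hinf i) (abs_nonneg _)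
      _ = (∑ i ∈ S, |δ i| + ∑ i ∈ Sᶜ, |δ i|) * (2 * lam) := by
          rw [← Finset.sum_mul, Finset.sum_add_sum_compl]
      _ ≤ 4 * lam * ∑ i ∈ S, |δ i| := by nlinarith
  have hcs := sq_sum_abs_le S s δ hS
  have htot := sum_sq_le_of_cone S s hs1 δ hS hc
  have ha0 : 0 ≤ ∑ i ∈ S, |δ i| := Finset.sum_nonneg fun i _ => abs_nonneg _
  have hm0 : 0 ≤ ∑ i ∈ Mset S s δ, (δ i) ^ 2 := Finset.sum_nonneg fun i _ => sq_nonneg _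
  have hR : 0 ≤ 16 * lam * Real.sqrt s / PhiSig := by positivity
  have hre := fun hpos => hRe.mul_le (half_pos hPhi) S δ hS hc hpos
  set a := ∑ i ∈ S, |δ i|
  set m := ∑ i ∈ Mset S s δ, (δ i) ^ 2
  refine Real.sqrt_le_iff.2 ⟨hR, htot.trans ?_⟩
  rcases hm0.eq_or_lt with hm | hm
  · rw [← hm]; simpa using sq_nonneg _
  have hk : PhiSig * m ≤ 8 * lam * a := by linarith [hre hm]
  -- Squaring and Cauchy–Schwarz give `Φ² m² ≤ 64 λ² s m`; one factor `m > 0` cancels.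
  have hk2 : (PhiSig ^ 2 * m) * m ≤ (64 * lam ^ 2 * s) * m := by
    calc (PhiSig ^ 2 * m) * m = (PhiSig * m) ^ 2 := by ring
      _ ≤ (8 * lam * a) ^ 2 := by gcongr
      _ = 64 * lam ^ 2 * a ^ 2 := by ring
      _ ≤ 64 * lam ^ 2 * (s * m) := by gcongr
      _ = (64 * lam ^ 2 * s) * m := by ring
  have hk3 := le_of_mul_le_mul_right hk2 hm
  have hls : 0 ≤ lam ^ 2 * (s : ℝ) := by positivity
  rw [div_pow, mul_pow, mul_pow, Real.sq_sqrt (Nat.cast_nonneg s), le_div_iff₀ (by positivity)]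
  nlinarith
end

section
/- Let p and s be integers with 1 ≤ s ≤ p/32. Then there exist M ≥ ⌊(1 + p/(2s))^{s/8}⌋ binary vectors w₁, …, w_M ∈ {0,1}^p, each having exactly s nonzero coordinates, such that the Hamming distance satisfies d_H(w_i, w_j) ≥ s/2 for all i ≠ j. -/
/-!
The vectors come from a Gilbert–Varshamov code over a large alphabet. With `m = ⌊p / s⌋ ≥ 32`,
reserve `s` disjoint blocks of `m` coordinates each; a word `x ∈ [m]^s` selects one coordinate in
every block, which gives a binary vector with exactly `s` ones (`blockVector`), and two such vectors
differ in at least as many places as the two words do (`hammingDist_le_blockVector`).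

A maximal code `C ⊆ [m]^s` with minimum distance at least `s / 2` has every word within distance
less than `s / 2` of a codeword (`exists_code`). Such a ball has at most `2 ^ s * m ^ (s / 2)`
elements (`card_ball_le`): choose the set of differing positions, then the values there. Hence
`m ^ s ≤ |C| * (2 ^ s * m ^ (s / 2))`. Since `F = ⌊(1 + p / (2 s)) ^ (s / 8)⌋` satisfies
`F ^ 8 ≤ m ^ s` and `2 ^ 8 ≤ m ^ 2`, comparing eighth powers yields `F ≤ |C|`.
-/

open BigOperators

/-- The radius condition `2 * d < s` is strict, but only `d ≤ s / 2` (rounded down) is used. -/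
lemma card_ball_le {s m : ℕ} (hm : 1 ≤ m) (c : Fin s → Fin m) :
    (Finset.univ.filter (fun x : Fin s → Fin m => 2 * hammingDist x c < s)).card
      ≤ 2 ^ s * m ^ (s / 2) := by
  classical
  let D : Finset (Finset (Fin s)) := Finset.univ.filter (fun A => A.card ≤ s / 2)
  -- the words that agree with `c` outside `A`
  let T : Finset (Fin s) → Finset (Fin s → Fin m) := fun A =>
    Fintype.piFinset (fun i => if i ∈ A then Finset.univ else {c i})
  have hsub : (Finset.univ.filter (fun x : Fin s → Fin m => 2 * hammingDist x c < s))
      ⊆ D.biUnion T := by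
    intro x hx
    rw [Finset.mem_filter] at hx
    rw [Finset.mem_biUnion]
    refine ⟨Finset.univ.filter (fun i => x i ≠ c i), ?_, ?_⟩
    · simp only [D, Finset.mem_filter, Finset.mem_univ, true_and]
      have h := hx.2
      unfold hammingDist at h
      omega
    · simp only [T, Fintype.mem_piFinset]
      intro i
      by_cases h : x i = c i <;> simp [h]
  have hT : ∀ A ∈ D, (T A).card ≤ m ^ (s / 2) := by
    intro A hA
    have hA' : A.card ≤ s / 2 := by simpa [D] using hA
    have : (T A).card = m ^ A.card := by
      simp only [T, Fintype.card_piFinset, apply_ite Finset.card, Finset.card_univ,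
        Fintype.card_fin, Finset.card_singleton]
      rw [Finset.prod_ite_mem]
      simp
    rw [this]
    exact Nat.pow_le_pow_right hm hA'
  have hD : D.card ≤ 2 ^ s := by
    calc D.card ≤ (Finset.univ : Finset (Finset (Fin s))).card := Finset.card_filter_le _ _
      _ = 2 ^ s := by simp
  calc _ ≤ (D.biUnion T).card := Finset.card_le_card hsub
    _ ≤ D.card * m ^ (s / 2) := Finset.card_biUnion_le_card_mul _ _ _ hT
    _ ≤ _ := Nat.mul_le_mul_right _ hD

lemma exists_code {s m : ℕ} (hs : 1 ≤ s) (hm : 1 ≤ m) :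
    ∃ C : Finset (Fin s → Fin m),
      (∀ x ∈ C, ∀ y ∈ C, x ≠ y → s ≤ 2 * hammingDist x y) ∧
      m ^ s ≤ C.card * (2 ^ s * m ^ (s / 2)) := by
  classical
  let P : Finset (Finset (Fin s → Fin m)) :=
    Finset.univ.filter (fun C => ∀ x ∈ C, ∀ y ∈ C, x ≠ y → s ≤ 2 * hammingDist x y)
  have hP : P.Nonempty := ⟨∅, by simp [P]⟩
  obtain ⟨C, hC, hmax⟩ := P.exists_max_image Finset.card hP
  have hC' : ∀ x ∈ C, ∀ y ∈ C, x ≠ y → s ≤ 2 * hammingDist x y := by simpa [P] using hC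
  refine ⟨C, hC', ?_⟩
  have hcov : (Finset.univ : Finset (Fin s → Fin m)) ⊆
      C.biUnion (fun c => Finset.univ.filter (fun x => 2 * hammingDist x c < s)) := by
    intro x _
    by_contra hx
    simp only [Finset.mem_biUnion, Finset.mem_filter, Finset.mem_univ, true_and, not_exists,
      not_and, not_lt] at hx
    have hxC : x ∉ C := by
      intro h
      have := hx x h
      simp at this
      omega
    have hins : insert x C ∈ P := by
      simp only [P, Finset.mem_filter, Finset.mem_univ, true_and, Finset.mem_insert]
      rintro a (rfl | ha) b (rfl | hb) hab
      · exact absurd rfl hab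
      · exact hx b hb
      · rw [hammingDist_comm]; exact hx a ha
      · exact hC' a ha b hb hab
    have := hmax _ hins
    rw [Finset.card_insert_of_notMem hxC] at this
    omega
  calc m ^ s = (Finset.univ : Finset (Fin s → Fin m)).card := by simp
    _ ≤ _ := Finset.card_le_card hcov
    _ ≤ _ := Finset.card_biUnion_le_card_mul _ _ _ (fun c _ => card_ball_le hm c)

/-- The binary vector of length `p` whose ones sit at the positions `e (a, x a)`, one in each of the
`s` blocks `e (a, ·)` of `m` coordinates. -/
def blockVector {s m p : ℕ} (e : Fin s × Fin m ↪ Fin p) (x : Fin s → Fin m) : Fin p → Bool :=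
  fun i => decide (∃ a, e (a, x a) = i)

lemma card_blockVector {s m p : ℕ} (e : Fin s × Fin m ↪ Fin p) (x : Fin s → Fin m) :
    (Finset.univ.filter (fun i => blockVector e x i = true)).card = s := by
  classical
  have : Finset.univ.filter (fun i => blockVector e x i = true)
      = Finset.univ.image (fun a => e (a, x a)) := by
    ext i; simp [blockVector]
  rw [this, Finset.card_image_of_injective]
  · simp
  · intro a b h
    exact congrArg Prod.fst (e.injective h)

lemma hammingDist_le_blockVector {s m p : ℕ} (e : Fin s × Fin m ↪ Fin p) (x y : Fin s → Fin m) :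
    hammingDist x y ≤ hammingDist (blockVector e x) (blockVector e y) := by
  classical
  unfold hammingDist
  -- in a block where the words differ, the position selected by `x` is not selected by `y`
  apply Finset.card_le_card_of_injOn (fun a => e (a, x a))
  · intro a ha
    have ha' : x a ≠ y a := by simpa using ha
    have h1 : blockVector e x (e (a, x a)) = true := by simp [blockVector]
    have h2 : blockVector e y (e (a, x a)) = false := by
      simp only [blockVector, decide_eq_false_iff_not, not_exists]
      intro b hb
      have h := e.injective hb
      rw [Prod.mk.injEq] at h
      obtain ⟨rfl, h⟩ := h
      exact ha' h.symm
    simp [h1, h2]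
  · intro a _ b _ h
    exact congrArg Prod.fst (e.injective h)

lemma floor_pow_eight_le {p s : ℕ} (hs : 1 ≤ s) (hsp : 32 * s ≤ p) :
    ⌊(1 + (p : ℝ) / (2 * s)) ^ ((s : ℝ) / 8)⌋₊ ^ 8 ≤ (p / s) ^ s := by
  have hm : 32 ≤ p / s := (Nat.le_div_iff_mul_le hs).2 hsp
  have hs0 : (0 : ℝ) < s := by exact_mod_cast hs
  have hb0 : (0 : ℝ) ≤ 1 + (p : ℝ) / (2 * s) := by positivity
  have hb : 1 + (p : ℝ) / (2 * s) ≤ ((p / s : ℕ) : ℝ) := by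
    have h1 : p < s * (p / s + 1) := Nat.lt_mul_div_succ p hs
    have h1' : (p : ℝ) < s * (((p / s : ℕ) : ℝ) + 1) := by exact_mod_cast h1
    have hm' : (32 : ℝ) ≤ ((p / s : ℕ) : ℝ) := by exact_mod_cast hm
    have : (p : ℝ) / (2 * s) ≤ (((p / s : ℕ) : ℝ) + 1) / 2 := by
      rw [div_le_div_iff₀ (by positivity) (by norm_num)]
      linarith
    linarith
  have hF : (⌊(1 + (p : ℝ) / (2 * s)) ^ ((s : ℝ) / 8)⌋₊ : ℝ)
      ≤ (1 + (p : ℝ) / (2 * s)) ^ ((s : ℝ) / 8) := Nat.floor_le (by positivity)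
  have : (⌊(1 + (p : ℝ) / (2 * s)) ^ ((s : ℝ) / 8)⌋₊ : ℝ) ^ 8 ≤ ((p / s : ℕ) : ℝ) ^ s := by
    calc _ ≤ ((1 + (p : ℝ) / (2 * s)) ^ ((s : ℝ) / 8)) ^ 8 :=
          pow_le_pow_left₀ (Nat.cast_nonneg _) hF 8
      _ = (1 + (p : ℝ) / (2 * s)) ^ s := by
          rw [← Real.rpow_natCast _ 8, ← Real.rpow_mul hb0, ← Real.rpow_natCast _ s]
          congr 1
          push_cast
          ring
      _ ≤ _ := pow_le_pow_left₀ hb0 hb s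
  exact_mod_cast this

/-- If `F` exceeded `N`, then `F * (2 ^ s * m ^ (s / 2))`, whose eighth power is at most
`m ^ s * m ^ (2 * s) * m ^ (4 * s)`, would exceed `m ^ s`. -/
lemma le_of_pow_eight_le {F N m s : ℕ} (hm : 32 ≤ m) (hF : F ^ 8 ≤ m ^ s)
    (hN : m ^ s ≤ N * (2 ^ s * m ^ (s / 2))) : F ≤ N := by
  have h2 : (2 ^ s) ^ 8 ≤ m ^ (2 * s) := by
    rw [← pow_mul, mul_comm s 8, pow_mul, pow_mul]
    exact Nat.pow_le_pow_left (by nlinarith) s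
  have h3 : (m ^ (s / 2)) ^ 8 ≤ m ^ (4 * s) := by
    rw [← pow_mul]
    exact Nat.pow_le_pow_right (by omega) (by omega)
  have h : (F * (2 ^ s * m ^ (s / 2))) ^ 8 ≤ (m ^ s) ^ 8 := by
    calc (F * (2 ^ s * m ^ (s / 2))) ^ 8 = F ^ 8 * ((2 ^ s) ^ 8 * (m ^ (s / 2)) ^ 8) := by
          rw [mul_pow, mul_pow]
      _ ≤ m ^ s * (m ^ (2 * s) * m ^ (4 * s)) := by gcongr
      _ = m ^ (7 * s) := by rw [← pow_add, ← pow_add]; congr 1; ring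
      _ ≤ m ^ (s * 8) := Nat.pow_le_pow_right (by omega) (by omega)
      _ = (m ^ s) ^ 8 := pow_mul _ _ _
  have h' := (lt_or_ge _ _).resolve_left fun hlt =>
    absurd h (not_le.2 (Nat.pow_lt_pow_left hlt (by norm_num : (8 : ℕ) ≠ 0)))
  have hpos : 0 < 2 ^ s * m ^ (s / 2) := by positivity
  exact Nat.le_of_mul_le_mul_right (h'.trans hN) hpos

theorem stmt7 (p s : ℕ) (hs : 1 ≤ s) (hsp : 32 * s ≤ p) :
    ∃ (M : ℕ) (w : Fin M → Fin p → Bool),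
      ⌊(1 + (p : ℝ) / (2 * s)) ^ ((s : ℝ) / 8)⌋₊ ≤ M ∧
      (∀ j, (Finset.univ.filter (fun i => w j i = true)).card = s) ∧
      (∀ i j, i ≠ j → (s : ℝ) / 2 ≤ (hammingDist (w i) (w j) : ℝ)) := by
  have hm : 32 ≤ p / s := (Nat.le_div_iff_mul_le hs).2 hsp
  obtain ⟨C, hC, hcard⟩ := exists_code (s := s) (m := p / s) hs (by omega)
  obtain ⟨e⟩ : Nonempty (Fin s × Fin (p / s) ↪ Fin p) := by
    apply Function.Embedding.nonempty_of_card_le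
    simpa using Nat.mul_div_le p s
  refine ⟨C.card, fun j => blockVector e (C.equivFin.symm j : Fin s → Fin (p / s)),
    le_of_pow_eight_le hm (floor_pow_eight_le hs hsp) hcard,
    fun j => card_blockVector e _, fun i j hij => ?_⟩
  have hne : (C.equivFin.symm i : Fin s → Fin (p / s)) ≠ C.equivFin.symm j := fun h =>
    hij (C.equivFin.symm.injective (Subtype.ext h))
  have h1 := hC _ (C.equivFin.symm i).2 _ (C.equivFin.symm j).2 hne
  have h2 := hammingDist_le_blockVector e (C.equivFin.symm i : Fin s → Fin (p / s))
    (C.equivFin.symm j)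
  have h3 : s ≤ 2 * hammingDist (blockVector e (C.equivFin.symm i : Fin s → Fin (p / s)))
      (blockVector e (C.equivFin.symm j : Fin s → Fin (p / s))) := by omega
  rw [div_le_iff₀ (by norm_num), mul_comm]
  exact_mod_cast h3
end

section
/- Let p ≥ 1, let Σ ∈ ℝ^{p×p} be symmetric positive-definite, let O ⊆ {1,…,p} be nonempty with complement M = {1,…,p} ∖ O, and set S_M = Σ_{MM} − Σ_{MO} Σ_{OO}^{-1} Σ_{OM}. For β ∈ ℝ^p and σ_β > 0, let Ω_β^O ∈ ℝ^{(|O|+1)×(|O|+1)} be the symmetric block matrix with top-left block Σ_{OO}, top-right block Σ_O β, bottom-left block (Σ_O β)ᵀ, and bottom-right entry βᵀΣβ + σ_β². Then for all β, γ ∈ ℝ^p and σ_β, σ_γ > 0, Ω_β^O and Ω_γ^O are positive definite and ½ { log(det(Ω_γ^O)/det(Ω_β^O)) − (|O| + 1) + Tr((Ω_γ^O)^{-1} Ω_β^O) } ≤ ½ { (σ_γ² + γ_MᵀS_Mγ_M)/(σ_β² + β_MᵀS_Mβ_M) + (σ_β² + β_MᵀS_Mβ_M)/(σ_γ² + γ_MᵀS_Mγ_M)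 − 2 + (β − γ)ᵀ Σ_Oᵀ Σ_OO^{-1} Σ_O (β − γ)/(σ_γ² + γ_MᵀS_Mγ_M) }. (The left-hand side is the Kullback–Leibler divergence between the centred Gaussian distributions with covariance matrices Ω_β^O and Ω_γ^O.) -/
/-!
Write `A = Σ_OO`, `b = Σ_O β`, `c = Σ_O γ`. Both `Ω` matrices are the same matrix `A` bordered by a
vector and a scalar, so everything reduces to the scalar Schur complement of `A`, which is
`s_β = σ_β² + β_Mᵀ S_M β_M` (`quad_eq`: `βᵀΣβ = bᵀA⁻¹b + β_Mᵀ S_M β_M`). This is positive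
because `S_M` is positive semidefinite (`quadM_schur_nonneg`). The block formulas give
`det Ω_β = det A · s_β` and
`Tr(Ω_γ⁻¹ Ω_β) = |O| + (s_β + (b - c)ᵀ A⁻¹ (b - c)) / s_γ`,
so the left-hand side equals the right-hand side except that `log (s_γ / s_β)` replaces
`s_γ / s_β - 1`; the inequality is `log x ≤ x - 1`.
-/

open Matrix BigOperators

/-- Submatrix of `Sig` with rows indexed by `A` and columns by `B`. -/
def subm {p : ℕ} (Sig : Matrix (Fin p) (Fin p) ℝ) (A B : Finset (Fin p)) :
    Matrix ↥A ↥B ℝ := Sig.submatrix Subtype.val Subtype.val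

/-- Rows of `Sig` indexed by `A`. -/
def rowsm {p : ℕ} (Sig : Matrix (Fin p) (Fin p) ℝ) (A : Finset (Fin p)) :
    Matrix ↥A (Fin p) ℝ := Sig.submatrix Subtype.val id

/-- Schur complement `S_M = Σ_{MM} − Σ_{MO} Σ_{OO}⁻¹ Σ_{OM}` with `M = Oᶜ`. -/
noncomputable def schur {p : ℕ} (Sig : Matrix (Fin p) (Fin p) ℝ) (O : Finset (Fin p)) :
    Matrix ↥(Oᶜ) ↥(Oᶜ) ℝ :=
  subm Sig Oᶜ Oᶜ - subm Sig Oᶜ O * (subm Sig O O)⁻¹ * subm Sig O Oᶜ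

/-- Quadratic form `β_Mᵀ S β_M` of a matrix indexed by `M ⊆ {1,…,p}` applied to the
restriction of `β`. -/
noncomputable def quadM {p : ℕ} {M : Finset (Fin p)} (S : Matrix ↥M ↥M ℝ)
    (β : Fin p → ℝ) : ℝ :=
  (fun i : ↥M => β i) ⬝ᵥ S.mulVec (fun i : ↥M => β i)

/-- The block matrix `Ω_β^O` with top-left block `Σ_{OO}`, top-right block `Σ_O β`,
bottom-left block `(Σ_O β)ᵀ` and bottom-right entry `βᵀΣβ + σ²`. -/
noncomputable def OmegaBO {p : ℕ} (Sig : Matrix (Fin p) (Fin p) ℝ) (O : Finset (Fin p))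
    (β : Fin p → ℝ) (σ : ℝ) : Matrix (↥O ⊕ Unit) (↥O ⊕ Unit) ℝ :=
  Matrix.fromBlocks (subm Sig O O)
    (Matrix.of fun i _ => (rowsm Sig O).mulVec β i)
    (Matrix.of fun _ j => (rowsm Sig O).mulVec β j)
    (Matrix.of fun _ _ => β ⬝ᵥ Sig.mulVec β + σ ^ 2)

section Bordered

variable {n : Type*} [Fintype n] [DecidableEq n]

/-- The symmetric matrix `A` bordered by the vector `b` and the corner entry `d`. -/
def bordered (A : Matrix n n ℝ) (b : n → ℝ) (d : ℝ) : Matrix (n ⊕ Unit) (n ⊕ Unit) ℝ :=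
  fromBlocks A (replicateCol Unit b) (replicateRow Unit b) (of fun _ _ => d)

lemma bordered_schur (A : Matrix n n ℝ) (b : n → ℝ) (d : ℝ) :
    (of fun _ _ => d : Matrix Unit Unit ℝ) - replicateRow Unit b * A⁻¹ * replicateCol Unit b
      = of fun _ _ => d - b ⬝ᵥ A⁻¹ *ᵥ b := by
  ext i j
  rw [Matrix.mul_assoc, ← replicateCol_mulVec]
  simp [Matrix.mul_apply, dotProduct]

lemma det_bordered {A : Matrix n n ℝ} (hA : A.PosDef) (b : n → ℝ) (d : ℝ) :
    (bordered A b d).det = A.det * (d - b ⬝ᵥ A⁻¹ *ᵥ b) := by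
  have := hA.isUnit.invertible
  rw [bordered, det_fromBlocks₁₁, invOf_eq_nonsing_inv, bordered_schur]
  simp

lemma bordered_posDef {A : Matrix n n ℝ} (hA : A.PosDef) (b : n → ℝ) (d : ℝ)
    (hs : 0 < d - b ⬝ᵥ A⁻¹ *ᵥ b) : (bordered A b d).PosDef := by
  have := hA.isUnit.invertible
  have hpsd : (bordered A b d).PosSemidef := by
    have hrow : replicateRow Unit b = (replicateCol Unit b)ᴴ := by
      ext; simp
    rw [bordered, hrow, PosDef.fromBlocks₁₁ _ _ hA, ← hrow, bordered_schur]
    have : (of fun _ _ => d - b ⬝ᵥ A⁻¹ *ᵥ b : Matrix Unit Unit ℝ)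
        = diagonal fun _ => d - b ⬝ᵥ A⁻¹ *ᵥ b := by
      ext; simp
    rw [this]
    exact PosSemidef.diagonal fun _ => hs.le
  rw [hpsd.posDef_iff_det_ne_zero, det_bordered hA]
  exact mul_ne_zero hA.det_pos.ne' hs.ne'

/-- Explicit inverse of a bordered matrix; `u` is `A⁻¹ c` and `s` the scalar Schur complement. -/
lemma inv_bordered {A : Matrix n n ℝ} (hA : A.PosDef) (c u : n → ℝ) (e s : ℝ)
    (hu : A⁻¹ *ᵥ c = u) (hs : e - c ⬝ᵥ u = s) (hs0 : s ≠ 0) :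
    (bordered A c e)⁻¹ = fromBlocks (A⁻¹ + s⁻¹ • vecMulVec u u) (replicateCol Unit (-(s⁻¹ • u)))
      (replicateRow Unit (-(s⁻¹ • u))) (of fun _ _ => s⁻¹) := by
  have hdet : IsUnit A.det := (isUnit_iff_isUnit_det A).1 hA.isUnit
  have huA : u ᵥ* A = c := by
    have hAT : Aᵀ = A := by simpa using hA.isHermitian.eq
    rw [← mulVec_transpose, hAT, ← hu, mulVec_mulVec, mul_nonsing_inv _ hdet, one_mulVec]
  have huc : u ⬝ᵥ c = e - s := by rw [dotProduct_comm]; linarith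
  apply inv_eq_left_inv
  rw [bordered, fromBlocks_multiply, ← fromBlocks_one]
  congr 1
  · rw [Matrix.add_mul, nonsing_inv_mul _ hdet, smul_mul, vecMulVec_mul, huA]
    ext i j
    simp [Matrix.mul_apply, vecMulVec_apply]
    ring
  · rw [Matrix.add_mul, ← replicateCol_mulVec, hu, smul_mul, ← replicateCol_mulVec,
      vecMulVec_mulVec, huc]
    ext i j
    simp [Matrix.mul_apply]
    field_simp
    ring
  · rw [← replicateRow_vecMul, neg_vecMul, smul_vecMul, huA]
    ext i j
    simp [Matrix.mul_apply]
  · ext i j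
    have : (replicateRow Unit (-(s⁻¹ • u)) * replicateCol Unit c) i j = -(s⁻¹ * (u ⬝ᵥ c)) := by
      rw [← smul_eq_mul, ← smul_dotProduct, ← neg_dotProduct]
      rfl
    rw [Matrix.add_apply, this, huc]
    simp [Matrix.mul_apply]
    field_simp
    ring

lemma trace_fromBlocks_unit (A : Matrix n n ℝ) (B : Matrix n Unit ℝ) (C : Matrix Unit n ℝ)
    (D : Matrix Unit Unit ℝ) : (fromBlocks A B C D).trace = A.trace + D.trace := by
  simp [trace, Fintype.sum_sum_type]

lemma trace_inv_bordered_mul {A : Matrix n n ℝ} (hA : A.PosDef) (b c : n → ℝ) (d e s : ℝ)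
    (hs : e - c ⬝ᵥ A⁻¹ *ᵥ c = s) (hs0 : s ≠ 0) :
    ((bordered A c e)⁻¹ * bordered A b d).trace
      = Fintype.card n + (d - b ⬝ᵥ A⁻¹ *ᵥ b + (b - c) ⬝ᵥ A⁻¹ *ᵥ (b - c)) / s := by
  have hdet : IsUnit A.det := (isUnit_iff_isUnit_det A).1 hA.isUnit
  have hAT : Aᵀ = A := by simpa using hA.isHermitian.eq
  have hsymm : c ⬝ᵥ A⁻¹ *ᵥ b = b ⬝ᵥ A⁻¹ *ᵥ c := by
    rw [dotProduct_mulVec, ← mulVec_transpose, transpose_nonsing_inv, hAT, dotProduct_comm]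
  rw [inv_bordered hA c _ e s rfl hs hs0, bordered, fromBlocks_multiply, trace_fromBlocks_unit]
  set u := A⁻¹ *ᵥ c with hu
  have huA : u ᵥ* A = c := by
    rw [← mulVec_transpose, hAT, hu, mulVec_mulVec, mul_nonsing_inv _ hdet, one_mulVec]
  have h1 : (replicateCol Unit (-(s⁻¹ • u)) * replicateRow Unit b).trace = -(s⁻¹ * (b ⬝ᵥ u)) := by
    rw [trace_mul_comm, ← smul_eq_mul, ← dotProduct_smul, ← dotProduct_neg]
    simp [trace, Matrix.mul_apply, dotProduct]
  have h2 : (replicateRow Unit (-(s⁻¹ • u)) * replicateCol Unit b).trace = -(s⁻¹ * (b ⬝ᵥ u)) := by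
    rw [dotProduct_comm, ← smul_eq_mul, ← smul_dotProduct, ← neg_dotProduct]
    simp [trace, Matrix.mul_apply, dotProduct]
  have h3 : ((of fun _ _ => s⁻¹ : Matrix Unit Unit ℝ) * of fun _ _ => d).trace = s⁻¹ * d := by
    simp [trace, Matrix.mul_apply]
  rw [trace_add, trace_add, h1, h2, h3, Matrix.add_mul, nonsing_inv_mul _ hdet, smul_mul,
    vecMulVec_mul, huA, trace_add, trace_smul, trace_vecMulVec, trace_one, mulVec_sub, ← hu,
    sub_dotProduct, dotProduct_sub, dotProduct_sub, hsymm, dotProduct_comm u c, smul_eq_mul]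
  field_simp
  ring

end Bordered

section Split

variable {p : ℕ} (Sig : Matrix (Fin p) (Fin p) ℝ) (O : Finset (Fin p))

lemma sum_split (f : Fin p → ℝ) :
    ∑ i, f i = ∑ i : ↥O, f i + ∑ i : ↥(Oᶜ), f i := by
  rw [Finset.sum_coe_sort O f, Finset.sum_coe_sort Oᶜ f, Finset.sum_add_sum_compl]

lemma rowsm_mulVec_split (A : Finset (Fin p)) (β : Fin p → ℝ) :
    (rowsm Sig A) *ᵥ β
      = subm Sig A O *ᵥ (fun i : ↥O => β i) + subm Sig A Oᶜ *ᵥ (fun i : ↥(Oᶜ) => β i) := by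
  ext i
  simp only [mulVec, dotProduct, Pi.add_apply]
  rw [sum_split O]
  rfl

lemma quad_split (β : Fin p → ℝ) :
    β ⬝ᵥ Sig *ᵥ β = (fun i : ↥O => β i) ⬝ᵥ rowsm Sig O *ᵥ β
      + (fun i : ↥(Oᶜ) => β i) ⬝ᵥ rowsm Sig Oᶜ *ᵥ β := by
  rw [dotProduct, sum_split O]
  rfl

variable {Sig}

lemma subm_posDef (hSig : Sig.PosDef) : (subm Sig O O).PosDef :=
  hSig.submatrix Subtype.val_injective

/-- Completing the square in the `O`-coordinates of the quadratic form of `Σ`. -/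
lemma quad_eq (hSig : Sig.PosDef) (β : Fin p → ℝ) :
    β ⬝ᵥ Sig *ᵥ β = (rowsm Sig O *ᵥ β) ⬝ᵥ (subm Sig O O)⁻¹ *ᵥ (rowsm Sig O *ᵥ β)
      + quadM (schur Sig O) β := by
  have hA := subm_posDef O hSig
  have hdet : IsUnit (subm Sig O O).det := (isUnit_iff_isUnit_det _).1 hA.isUnit
  have hAT : (subm Sig O O)ᵀ = subm Sig O O := by simpa using hA.isHermitian.eq
  have hC : subm Sig Oᶜ O = (subm Sig O Oᶜ)ᵀ := by
    have hS : Sigᵀ = Sig := by simpa using hSig.isHermitian.eq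
    ext i j
    exact congrFun (congrFun hS.symm _) _
  rw [quad_split Sig O, rowsm_mulVec_split Sig O O, rowsm_mulVec_split Sig O Oᶜ, quadM, schur, hC]
  set A := subm Sig O O
  set B := subm Sig O Oᶜ
  set D := subm Sig Oᶜ Oᶜ
  set x : ↥O → ℝ := fun i => β i
  set y : ↥(Oᶜ) → ℝ := fun i => β i
  have hsymm : ∀ v w : ↥O → ℝ, (A *ᵥ v) ⬝ᵥ A⁻¹ *ᵥ w = v ⬝ᵥ w := by
    intro v w
    rw [dotProduct_mulVec, ← mulVec_transpose, transpose_nonsing_inv, hAT, mulVec_mulVec,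
      nonsing_inv_mul _ hdet, one_mulVec]
  have hBt : ∀ w : ↥O → ℝ, y ⬝ᵥ Bᵀ *ᵥ w = (B *ᵥ y) ⬝ᵥ w := by
    intro w
    rw [dotProduct_mulVec, vecMul_transpose]
  have hinv : A⁻¹ *ᵥ (A *ᵥ x) = x := by
    rw [mulVec_mulVec, nonsing_inv_mul _ hdet, one_mulVec]
  simp only [dotProduct_add, add_dotProduct, mulVec_add, sub_mulVec, dotProduct_sub,
    ← mulVec_mulVec, hBt, hsymm, hinv, dotProduct_comm (A *ᵥ x) x]
  ring

/-- `S_M` is positive semidefinite: `y ↦ yᵀ S_M y` is the value of the form of `Σ` at the vector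
extending `y` by `-Σ_OO⁻¹ Σ_OM y`, for which the square in `quad_eq` vanishes. -/
lemma quadM_schur_nonneg (hSig : Sig.PosDef) (β : Fin p → ℝ) :
    0 ≤ quadM (schur Sig O) β := by
  have hdet : IsUnit (subm Sig O O).det :=
    (isUnit_iff_isUnit_det _).1 (subm_posDef O hSig).isUnit
  set z : ↥O → ℝ :=
    -((subm Sig O O)⁻¹ *ᵥ (subm Sig O Oᶜ *ᵥ (fun i : ↥(Oᶜ) => β i))) with hz
  let β' : Fin p → ℝ := fun i => if h : i ∈ O then z ⟨i, h⟩ else β i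
  have hO : (fun i : ↥O => β' i) = z := by
    ext i; simp [β']
  have hM : (fun i : ↥(Oᶜ) => β' i) = fun i : ↥(Oᶜ) => β i := by
    ext i
    have := Finset.mem_compl.1 i.2
    simp [β', this]
  have hq : quadM (schur Sig O) β' = quadM (schur Sig O) β := by
    rw [quadM, quadM, hM]
  have h0 : rowsm Sig O *ᵥ β' = 0 := by
    rw [rowsm_mulVec_split Sig O, hO, hM, hz, mulVec_neg, mulVec_mulVec, mul_nonsing_inv _ hdet,
      one_mulVec, neg_add_cancel]
  have h := quad_eq O hSig β'
  rw [h0, zero_dotProduct, zero_add, hq] at h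
  rw [← h]
  simpa using hSig.posSemidef.dotProduct_mulVec_nonneg β'

end Split

theorem stmt11 (p : ℕ) (hp : 1 ≤ p)
    (Sig : Matrix (Fin p) (Fin p) ℝ) (hSig : Sig.PosDef)
    (O : Finset (Fin p)) (hO : O.Nonempty)
    (β γ : Fin p → ℝ) (σβ σγ : ℝ) (hσβ : 0 < σβ) (hσγ : 0 < σγ) :
    (OmegaBO Sig O β σβ).PosDef ∧ (OmegaBO Sig O γ σγ).PosDef ∧
    (1 / 2 : ℝ) * (Real.log ((OmegaBO Sig O γ σγ).det / (OmegaBO Sig O β σβ).det)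
        - ((O.card : ℝ) + 1)
        + Matrix.trace ((OmegaBO Sig O γ σγ)⁻¹ * OmegaBO Sig O β σβ))
      ≤ (1 / 2 : ℝ) *
        ((σγ ^ 2 + quadM (schur Sig O) γ) / (σβ ^ 2 + quadM (schur Sig O) β)
          + (σβ ^ 2 + quadM (schur Sig O) β) / (σγ ^ 2 + quadM (schur Sig O) γ) - 2
          + ((β - γ) ⬝ᵥ ((rowsm Sig O)ᵀ * (subm Sig O O)⁻¹ * rowsm Sig O).mulVec (β - γ))
              / (σγ ^ 2 + quadM (schur Sig O) γ)) := by
  have hA := subm_posDef O hSig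
  have key : ∀ (δ : Fin p → ℝ) (σ : ℝ), δ ⬝ᵥ Sig *ᵥ δ + σ ^ 2
      - (rowsm Sig O *ᵥ δ) ⬝ᵥ (subm Sig O O)⁻¹ *ᵥ (rowsm Sig O *ᵥ δ)
      = σ ^ 2 + quadM (schur Sig O) δ := by
    intro δ σ
    rw [quad_eq O hSig δ]
    ring
  have hpos : ∀ (δ : Fin p → ℝ) (σ : ℝ), 0 < σ → 0 < σ ^ 2 + quadM (schur Sig O) δ :=
    fun δ σ hσ => add_pos_of_pos_of_nonneg (pow_pos hσ 2) (quadM_schur_nonneg O hSig δ)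
  have hΩ : ∀ (δ : Fin p → ℝ) (σ : ℝ), OmegaBO Sig O δ σ
      = bordered (subm Sig O O) (rowsm Sig O *ᵥ δ) (δ ⬝ᵥ Sig *ᵥ δ + σ ^ 2) := fun _ _ => rfl
  have hPD : ∀ (δ : Fin p → ℝ) (σ : ℝ), 0 < σ → (OmegaBO Sig O δ σ).PosDef := by
    intro δ σ hσ
    rw [hΩ]
    exact bordered_posDef hA _ _ (by rw [key]; exact hpos δ σ hσ)
  refine ⟨hPD β σβ hσβ, hPD γ σγ hσγ, ?_⟩
  have hsβ := hpos β σβ hσβ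
  have hsγ := hpos γ σγ hσγ
  have hQ : (β - γ) ⬝ᵥ ((rowsm Sig O)ᵀ * (subm Sig O O)⁻¹ * rowsm Sig O).mulVec (β - γ)
      = (rowsm Sig O *ᵥ β - rowsm Sig O *ᵥ γ) ⬝ᵥ
        (subm Sig O O)⁻¹ *ᵥ (rowsm Sig O *ᵥ β - rowsm Sig O *ᵥ γ) := by
    rw [← mulVec_sub, ← mulVec_mulVec, ← mulVec_mulVec, dotProduct_mulVec, vecMul_transpose]
  rw [hΩ, hΩ, det_bordered hA, det_bordered hA,
    trace_inv_bordered_mul hA _ _ _ _ _ (key γ σγ) hsγ.ne', key, key, hQ,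
    mul_div_mul_left _ _ hA.det_pos.ne', Fintype.card_coe,
    add_div (_ + quadM (schur Sig O) β) (_ ⬝ᵥ _)]
  have hlog := Real.log_le_sub_one_of_pos (div_pos hsγ hsβ)
  linarith
end

section
/- Let p ≥ 1, let Σ ∈ ℝ^{p×p} be symmetric positive-definite, let O ⊆ {1,…,p} be nonempty with complement M = {1,…,p} ∖ O, and set S_M = Σ_{MM} − Σ_{MO} Σ_{OO}^{-1} Σ_{OM}. For β ∈ ℝ^p and σ_β > 0, let Ω_β^O ∈ ℝ^{(|O|+1)×(|O|+1)} be the symmetric block matrix with top-left block Σ_{OO}, top-right block Σ_O β, bottom-left block (Σ_O β)ᵀ, and bottom-right entry βᵀΣβ + σ_β². Then det(Ω_β^O) = det(Σ_{OO}) · (σ_β² + β_Mᵀ S_M β_M). -/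
/-!
The determinant of a block matrix factors as `det Σ_OO` times the Schur complement of `Σ_OO`,
here the scalar `βᵀΣβ + σ² - vᵀ Σ_OO⁻¹ v` with `v = Σ_O β`. Splitting `β` into `β_O` and `β_M`
gives `v = Σ_OO β_O + Σ_OM β_M`, so `Σ_OO⁻¹ v = β_O + Σ_OO⁻¹ Σ_OM β_M`; by symmetry of `Σ` every
term involving `β_O` cancels, which leaves `σ² + β_Mᵀ S_M β_M`.
-/

open Matrix BigOperators

lemma sum_split_compl {p : ℕ} (O : Finset (Fin p)) (f : Fin p → ℝ) :
    ∑ i, f i = ∑ i : ↥O, f i + ∑ i : ↥(Oᶜ), f i := by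
  rw [← Finset.sum_add_sum_compl O f, ← Finset.sum_coe_sort O f, ← Finset.sum_coe_sort Oᶜ f]

lemma rowsm_mulVec {p : ℕ} (Sig : Matrix (Fin p) (Fin p) ℝ) (A O : Finset (Fin p))
    (β : Fin p → ℝ) :
    (rowsm Sig A).mulVec β =
      subm Sig A O *ᵥ (fun i : ↥O => β i) + subm Sig A Oᶜ *ᵥ (fun i : ↥(Oᶜ) => β i) := by
  ext i
  simp only [Pi.add_apply, Matrix.mulVec, dotProduct, rowsm, subm, Matrix.submatrix_apply, id]
  exact sum_split_compl O _

lemma quadratic_split {p : ℕ} (Sig : Matrix (Fin p) (Fin p) ℝ) (O : Finset (Fin p))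
    (β : Fin p → ℝ) :
    β ⬝ᵥ Sig.mulVec β =
      (fun i : ↥O => β i) ⬝ᵥ (rowsm Sig O).mulVec β
        + (fun i : ↥(Oᶜ) => β i) ⬝ᵥ (rowsm Sig Oᶜ).mulVec β :=
  sum_split_compl O _

theorem stmt12 (p : ℕ) (hp : 1 ≤ p)
    (Sig : Matrix (Fin p) (Fin p) ℝ) (hSig : Sig.PosDef)
    (O : Finset (Fin p)) (hO : O.Nonempty)
    (β : Fin p → ℝ) (σβ : ℝ) (hσβ : 0 < σβ) :
    (OmegaBO Sig O β σβ).det = (subm Sig O O).det * (σβ ^ 2 + quadM (schur Sig O) β) := by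
  have hsymm : Sigᵀ = Sig := by
    simpa [Matrix.IsHermitian, Matrix.conjTranspose_eq_transpose_of_trivial] using hSig.isHermitian
  have hA : (subm Sig O O).PosDef := hSig.submatrix Subtype.val_injective
  have hdet : IsUnit (subm Sig O O).det := hA.det_pos.ne'.isUnit
  let _ : Invertible (subm Sig O O) := Matrix.invertibleOfIsUnitDet _ hdet
  have hAT : (subm Sig O O)ᵀ = subm Sig O O := by
    simp [subm, Matrix.transpose_submatrix, hsymm]
  have hBT : (subm Sig O Oᶜ)ᵀ = subm Sig Oᶜ O := by
    simp [subm, Matrix.transpose_submatrix, hsymm]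
  unfold OmegaBO
  rw [Matrix.det_fromBlocks₁₁, Matrix.det_unique (n := Unit), Matrix.invOf_eq_nonsing_inv]
  congr 1
  have hscalar : ((Matrix.of fun (_ : Unit) j => (rowsm Sig O).mulVec β j)
      * (subm Sig O O)⁻¹ * (Matrix.of fun i (_ : Unit) => (rowsm Sig O).mulVec β i))
        default default =
      (rowsm Sig O).mulVec β ⬝ᵥ (subm Sig O O)⁻¹ *ᵥ (rowsm Sig O).mulVec β := by
    rw [Matrix.mul_assoc]
    rfl
  rw [Matrix.sub_apply, hscalar, Matrix.of_apply, quadratic_split Sig O,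
    rowsm_mulVec Sig O O, rowsm_mulVec Sig Oᶜ O]
  unfold quadM schur
  rw [← hBT]
  generalize (fun i : ↥O => β i) = a
  generalize (fun i : ↥(Oᶜ) => β i) = m
  generalize subm Sig O Oᶜ = B
  generalize subm Sig Oᶜ Oᶜ = D
  generalize subm Sig O O = A at *
  have hinv : A⁻¹ *ᵥ (A *ᵥ a) = a := by
    rw [Matrix.mulVec_mulVec, Matrix.nonsing_inv_mul _ hdet, Matrix.one_mulVec]
  have hcancel : (A *ᵥ a) ⬝ᵥ (A⁻¹ *ᵥ (B *ᵥ m)) = a ⬝ᵥ (B *ᵥ m) := by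
    rw [← Matrix.vecMul_transpose, hAT, ← Matrix.dotProduct_mulVec, Matrix.mulVec_mulVec,
      Matrix.mul_nonsing_inv _ hdet, Matrix.one_mulVec]
  have htr : ∀ x, m ⬝ᵥ (Bᵀ *ᵥ x) = (B *ᵥ m) ⬝ᵥ x := by
    intro x
    rw [Matrix.dotProduct_mulVec, Matrix.vecMul_transpose]
  simp only [Matrix.mulVec_add, Matrix.sub_mulVec, dotProduct_add, add_dotProduct,
    dotProduct_sub, hinv, hcancel, ← Matrix.mulVec_mulVec, htr]
  rw [dotProduct_comm (A *ᵥ a) a]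
  ring
end

section
/- Let p ≥ 2, τ > 0, B > 0, and x₁, x₂ ∈ ℝ^{p−1} with ‖x₂‖₂ < τB/2. Define Σ_x ∈ ℝ^{p×p} for x ∈ ℝ^{p−1} as the block matrix with top-left block τ I_{p−1}, top-right block 2x/B, bottom-left block 2xᵀ/B, and bottom-right entry τ. Then Σ_{x₂} is invertible and Tr(Σ_{x₂}^{-1} Σ_{x₁}) = p + (8/(B²τ)) · x₂ᵀ(x₂ − x₁) / (τ − 4‖x₂‖₂²/(τB²)). Moreover det(Σ_x) = τ^{p−2}(τ² − 4‖x‖₂²/B²) for every x ∈ ℝ^{p−1}, so det(Σ_{x₁}) = det(Σ_{x₂}) whenever ‖x₁‖₂ = ‖x₂‖₂; and if additionally ‖x₁‖₂ = ‖x₂‖₂ ≤ τB/4, then ½(Tr(Σ_{x₂}^{-1} Σ_{x₁}) − p) ≤ 8 x₂ᵀ(x₂ − x₁) / (B²τ²). -/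
/-!
The matrix `Σ_x` is `τ I` bordered by the vector `2x/B`, so everything follows from the Schur
complement `s = τ - 4‖x‖² / (τ B²)` of its top-left block. The determinant is `τ ^ q * s`
(`det_SigmaX`), and the hypothesis `‖x‖ < τB/2` says exactly that `s > 0`. The block inverse can then
be written down explicitly (`SigmaInv`), and taking the trace of its product with another
`Σ_y` gives the trace formula (`trace_SigmaInv_mul`). For the final estimate, `‖x₂‖ ≤ τB/4` gives
`s ≥ 3τ/4 ≥ τ/2`, while Cauchy–Schwarz and `‖x₁‖ = ‖x₂‖` give `x₂ᵀ(x₂ - x₁) ≥ 0`.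
-/

open Matrix BigOperators

/-- The covariance matrix `Σ_x` (of size `(q+1) × (q+1)`, indexed by `Fin q ⊕ Unit`)
with top-left block `τ I`, off-diagonal blocks `2x/B` and bottom-right entry `τ`. -/
noncomputable def SigmaX (q : ℕ) (τ B : ℝ) (x : Fin q → ℝ) :
    Matrix (Fin q ⊕ Unit) (Fin q ⊕ Unit) ℝ :=
  Matrix.fromBlocks (τ • (1 : Matrix (Fin q) (Fin q) ℝ))
    (Matrix.of fun i _ => 2 * x i / B)
    (Matrix.of fun _ j => 2 * x j / B)
    (Matrix.of fun _ _ => τ)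

lemma eNorm_sq_s14 {q : ℕ} (x : Fin q → ℝ) : eNorm x ^ 2 = x ⬝ᵥ x := by
  unfold eNorm
  rw [Real.sq_sqrt (Finset.sum_nonneg fun i _ => sq_nonneg _)]
  simp [dotProduct, sq]

lemma det_SigmaX (q : ℕ) (hq : 1 ≤ q) (τ B : ℝ) (hτ : 0 < τ) (x : Fin q → ℝ) :
    (SigmaX q τ B x).det = τ ^ (q - 1) * (τ ^ 2 - 4 * eNorm x ^ 2 / B ^ 2) := by
  let _ : Invertible (τ • (1 : Matrix (Fin q) (Fin q) ℝ)) :=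
    ⟨τ⁻¹ • 1, by simp [smul_smul, hτ.ne'], by simp [smul_smul, hτ.ne']⟩
  have hinv : ⅟(τ • (1 : Matrix (Fin q) (Fin q) ℝ)) = τ⁻¹ • 1 := rfl
  have hsum : ∑ i, τ⁻¹ * (2 * x i / B) * (2 * x i / B) = 4 * (x ⬝ᵥ x) / B ^ 2 * τ⁻¹ := by
    rw [dotProduct, Finset.mul_sum, Finset.sum_div, Finset.sum_mul]
    exact Finset.sum_congr rfl fun i _ => by ring
  obtain ⟨k, rfl⟩ : ∃ k, q = k + 1 := ⟨q - 1, by omega⟩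
  rw [SigmaX, det_fromBlocks₁₁, hinv, eNorm_sq_s14]
  simp only [det_smul, det_one, Fintype.card_fin, det_unique, Matrix.sub_apply, mul_apply, of_apply,
    Matrix.mul_smul, Matrix.mul_one, Matrix.smul_apply, smul_eq_mul, hsum, Nat.add_sub_cancel]
  field_simp
  ring

/-- The explicit block inverse of `SigmaX q τ B x`, where `s` stands for the Schur complement
`τ - 4‖x‖² / (τ B²)` of its top-left block. -/
noncomputable def SigmaInv (q : ℕ) (τ B s : ℝ) (x : Fin q → ℝ) :
    Matrix (Fin q ⊕ Unit) (Fin q ⊕ Unit) ℝ :=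
  Matrix.fromBlocks
    (τ⁻¹ • (1 : Matrix (Fin q) (Fin q) ℝ) + (4 / (B ^ 2 * τ ^ 2 * s)) • vecMulVec x x)
    (Matrix.of fun i _ => -(2 / (B * τ * s)) * x i)
    (Matrix.of fun _ j => -(2 / (B * τ * s)) * x j)
    (Matrix.of fun _ _ => s⁻¹)

/-- Block form of `SigmaInv * SigmaX` for two possibly different vectors; taking `y = x` gives the
identity matrix, and general `y` gives the trace. -/
lemma SigmaInv_mul (q : ℕ) (τ B s : ℝ) (x y : Fin q → ℝ) :
    SigmaInv q τ B s x * SigmaX q τ B y = Matrix.fromBlocks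
      ((τ⁻¹ * τ) • (1 : Matrix (Fin q) (Fin q) ℝ)
        + (4 / (B ^ 2 * τ ^ 2 * s) * τ) • vecMulVec x x
        - (4 / (B ^ 2 * τ * s)) • vecMulVec x y)
      (Matrix.of fun i _ => 2 / B * τ⁻¹ * y i
        + 8 / (B ^ 3 * τ ^ 2 * s) * (x ⬝ᵥ y) * x i - 2 / (B * τ * s) * τ * x i)
      (Matrix.of fun _ j => -(2 / (B * τ * s)) * τ * x j + 2 / B * s⁻¹ * y j)
      (Matrix.of fun _ _ => -(4 / (B ^ 2 * τ * s)) * (x ⬝ᵥ y) + s⁻¹ * τ) := by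
  rw [SigmaInv, SigmaX, fromBlocks_multiply]
  congr 1
  · ext i j
    simp [mul_apply, vecMulVec_apply]
    ring
  · ext i j
    have h : ∑ k, x i * x k * (2 * y k / B) = 2 / B * (x ⬝ᵥ y) * x i := by
      rw [dotProduct, Finset.mul_sum, Finset.sum_mul]
      exact Finset.sum_congr rfl fun k _ => by ring
    simp only [Matrix.add_mul, Matrix.smul_mul, Matrix.one_mul, Matrix.add_apply, Matrix.smul_apply, mul_apply,
      vecMulVec_apply, of_apply, smul_eq_mul, h, Finset.univ_unique, Finset.sum_singleton]
    ring
  · ext i j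
    simp [mul_apply]
    ring
  · ext i j
    have h : ∑ k, -(2 / (B * τ * s)) * x k * (2 * y k / B)
        = -(4 / (B ^ 2 * τ * s)) * (x ⬝ᵥ y) := by
      rw [dotProduct, Finset.mul_sum]
      exact Finset.sum_congr rfl fun k _ => by ring
    simp only [Matrix.add_apply, mul_apply, of_apply, h, Finset.univ_unique, Finset.sum_singleton]

lemma SigmaInv_mul_self (q : ℕ) (τ B s : ℝ) (hτ : τ ≠ 0) (hB : B ≠ 0) (hs : s ≠ 0)
    (x : Fin q → ℝ) (hx : x ⬝ᵥ x = (τ - s) * τ * B ^ 2 / 4) :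
    SigmaInv q τ B s x * SigmaX q τ B x = 1 := by
  rw [SigmaInv_mul, ← fromBlocks_one, hx]
  congr 1
  · ext i j
    simp only [Matrix.sub_apply, Matrix.add_apply, Matrix.smul_apply, smul_eq_mul]
    field_simp
    ring
  · ext i j
    simp only [of_apply, Matrix.zero_apply]
    field_simp
    ring
  · ext i j
    simp only [of_apply, Matrix.zero_apply]
    field_simp
    ring
  · ext i j
    simp only [of_apply, one_apply_eq]
    field_simp
    ring

lemma trace_blocks {m n : Type*} [Fintype m] [Fintype n] (A : Matrix m m ℝ) (B : Matrix m n ℝ)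
    (C : Matrix n m ℝ) (D : Matrix n n ℝ) :
    trace (Matrix.fromBlocks A B C D) = trace A + trace D := by
  simp [trace]

lemma trace_SigmaInv_mul (q : ℕ) (τ B s : ℝ) (hτ : τ ≠ 0) (hB : B ≠ 0) (hs : s ≠ 0)
    (x y : Fin q → ℝ) (hx : x ⬝ᵥ x = (τ - s) * τ * B ^ 2 / 4) :
    trace (SigmaInv q τ B s x * SigmaX q τ B y)
      = ((q : ℝ) + 1) + (8 / (B ^ 2 * τ)) * (x ⬝ᵥ (x - y)) / s := by
  have h : trace (Matrix.of fun _ _ : Unit => -(4 / (B ^ 2 * τ * s)) * (x ⬝ᵥ y) + s⁻¹ * τ)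
      = -(4 / (B ^ 2 * τ * s)) * (x ⬝ᵥ y) + s⁻¹ * τ := by simp [trace]
  rw [SigmaInv_mul, trace_blocks, h, trace_sub, trace_add, trace_smul, trace_smul, trace_smul,
    trace_one, trace_vecMulVec, trace_vecMulVec, dotProduct_sub, hx, Fintype.card_fin]
  simp only [smul_eq_mul]
  field_simp
  ring

/-- Cauchy–Schwarz for vectors of equal norm, from expanding `‖x - y‖² ≥ 0`. -/
lemma dotProduct_sub_nonneg {q : ℕ} (x y : Fin q → ℝ) (h : eNorm y = eNorm x) :
    0 ≤ x ⬝ᵥ (x - y) := by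
  have h1 : y ⬝ᵥ y = x ⬝ᵥ x := by rw [← eNorm_sq_s14, ← eNorm_sq_s14, h]
  have h2 : 0 ≤ (x - y) ⬝ᵥ (x - y) := by rw [← eNorm_sq_s14]; positivity
  rw [sub_dotProduct, dotProduct_sub, dotProduct_sub, dotProduct_comm y x] at h2
  rw [dotProduct_sub]
  linarith

theorem stmt14 (q : ℕ) (hq : 1 ≤ q) (τ B : ℝ) (hτ : 0 < τ) (hB : 0 < B)
    (x₁ x₂ : Fin q → ℝ) (hx₂ : eNorm x₂ < τ * B / 2) :
    IsUnit (SigmaX q τ B x₂).det ∧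
    Matrix.trace ((SigmaX q τ B x₂)⁻¹ * SigmaX q τ B x₁)
      = ((q : ℝ) + 1) + (8 / (B ^ 2 * τ)) * (x₂ ⬝ᵥ (x₂ - x₁))
          / (τ - 4 * eNorm x₂ ^ 2 / (τ * B ^ 2)) ∧
    (∀ x : Fin q → ℝ,
      (SigmaX q τ B x).det = τ ^ (q - 1) * (τ ^ 2 - 4 * eNorm x ^ 2 / B ^ 2)) ∧
    (eNorm x₁ = eNorm x₂ → (SigmaX q τ B x₁).det = (SigmaX q τ B x₂).det) ∧
    (eNorm x₁ = eNorm x₂ → eNorm x₂ ≤ τ * B / 4 →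
      (1 / 2 : ℝ) * (Matrix.trace ((SigmaX q τ B x₂)⁻¹ * SigmaX q τ B x₁) - ((q : ℝ) + 1))
        ≤ 8 * (x₂ ⬝ᵥ (x₂ - x₁)) / (B ^ 2 * τ ^ 2)) := by
  have hn : 0 ≤ eNorm x₂ := Real.sqrt_nonneg _
  obtain ⟨s, hs⟩ : ∃ s, s = τ - 4 * eNorm x₂ ^ 2 / (τ * B ^ 2) := ⟨_, rfl⟩
  have hself : x₂ ⬝ᵥ x₂ = (τ - s) * τ * B ^ 2 / 4 := by
    rw [hs, ← eNorm_sq_s14]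
    field_simp
    ring
  have hspos : 0 < s := by
    rw [hs, sub_pos, div_lt_iff₀ (by positivity)]
    nlinarith [mul_pos hτ hB]
  have hmul := SigmaInv_mul_self q τ B s hτ.ne' hB.ne' hspos.ne' x₂ hself
  have htr : trace ((SigmaX q τ B x₂)⁻¹ * SigmaX q τ B x₁)
      = ((q : ℝ) + 1) + (8 / (B ^ 2 * τ)) * (x₂ ⬝ᵥ (x₂ - x₁)) / s := by
    rw [inv_eq_left_inv hmul]
    exact trace_SigmaInv_mul q τ B s hτ.ne' hB.ne' hspos.ne' x₂ x₁ hself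
  refine ⟨isUnit_det_of_left_inverse hmul, hs ▸ htr, det_SigmaX q hq τ B hτ, ?_, ?_⟩
  · intro h
    rw [det_SigmaX q hq τ B hτ, det_SigmaX q hq τ B hτ, h]
  · intro h hle
    have hd := dotProduct_sub_nonneg x₂ x₁ h
    have hs2 : τ / 2 ≤ s := by
      have : 4 * eNorm x₂ ^ 2 / (τ * B ^ 2) ≤ τ / 2 := by
        rw [div_le_iff₀ (by positivity)]
        nlinarith [mul_pos hτ hB]
      linarith
    rw [htr]
    calc (1 / 2 : ℝ) * ((q : ℝ) + 1 + 8 / (B ^ 2 * τ) * (x₂ ⬝ᵥ (x₂ - x₁)) / s - ((q : ℝ) + 1))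
        = 4 / (B ^ 2 * τ) * (x₂ ⬝ᵥ (x₂ - x₁)) / s := by ring
      _ ≤ 4 / (B ^ 2 * τ) * (x₂ ⬝ᵥ (x₂ - x₁)) / (τ / 2) := by gcongr
      _ = 8 * (x₂ ⬝ᵥ (x₂ - x₁)) / (B ^ 2 * τ ^ 2) := by
        field_simp
        ring
end

section
/- Fix B > 0, R > 0 and 0 < λ₋ < λ₊, and set τ = (λ₋ + λ₊)/2. Fix x₁, x₂ ∈ ℝ^{p−1} with ‖x₁‖₂ = ‖x₂‖₂ ≤ B(λ₊ − λ₋)/8, and let O ⊆ {1,…,p} with p ∈ O; set O' = O ∖ {p}. Then Ω_{x₁}^O and Ω_{x₂}^O are positive definite and ½ { log(det(Ω_{x₂}^O)/det(Ω_{x₁}^O)) − (|O| + 1) + Tr((Ω_{x₂}^O)^{-1} Ω_{x₁}^O) } ≤ 10 max{1, 1/τ²} · max{1/B², 1/R²} · { | ‖(x₁)_{O'}‖₂² − ‖(x₂)_{O'}‖₂² | + Σ_{j=1}^{|O'|} |((x₁ − x₂)_{O'})_j| · |((x₂)_{O'})_j| }. (The left-hand side equals the Kullback–Leibler divergence between the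 centred Gaussians with covariances Ω_{x₁}^O and Ω_{x₂}^O.) Furthermore, if instead p ∉ O, then Ω_{x₁}^O = Ω_{x₂}^O. -/
/-!
Since `Σ_x β_x` vanishes outside the coordinate `p`, where it equals
`c = (B/2)(τ - 4‖x‖²/(B²τ))`, for `p ∈ O` the matrix `Ω_x^O` is, up to reindexing, the arrowhead
matrix `arrowMat τ c Δ u` with `u = 2 x_{O'} / B`, and `c`, `Δ = B c / 2 + R²` depend on `x` only
through `‖x‖`. For `p ∉ O` nothing but `‖x‖` is left, which gives the last claim.

The Schur complement of the block `τ I` has determinant `D(t) = (τ - t/τ) Δ - c²` with `t = ‖u‖²`.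
As `t ≤ 4‖x‖²/B²`, one has `D(t) ≥ 2 c R² / B > 0` (`schurDet_ge`), hence positive definiteness
(`arrowMat_posDef`). Moreover `det = τ^{|O'|} D` (`arrowMat_det`), and as `Ω₁ - Ω₂` is a symmetric
rank-two perturbation along the coordinate `p`,
`Tr(Ω₂⁻¹ Ω₁) = |O| + 1 - 2Δ/(τ D₂) ⟨u₁ - u₂, u₂⟩` (`arrowMat_trace`).
The inequality `log (D₂/D₁) ≤ (D₂ - D₁)/D₁ = Δ (t₁ - t₂)/(τ D₁)` then bounds the divergence
(`arrowMat_kl_le`), and `c ≥ 3τB/8`, a consequence of `‖x‖ ≤ Bτ/4`, yields the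
constant (`const_le`).
-/


open Matrix BigOperators

/-- The regression vector `β_x = (−x/τ, B/2)ᵀ`. -/
noncomputable def betaX (q : ℕ) (τ B : ℝ) (x : Fin q → ℝ) : Fin q ⊕ Unit → ℝ :=
  Sum.elim (fun i => -x i / τ) (fun _ => B / 2)

/-- The covariance matrix `Ω_x^O` of `((X)_O, Y)`: top-left block `(Σ_x)_{OO}`, off-diagonal
blocks `(Σ_x)_O β_x`, and bottom-right entry `Δ_x = β_xᵀ Σ_x β_x + R²`. -/
noncomputable def OmegaXO (q : ℕ) (τ B R : ℝ) (x : Fin q → ℝ)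
    (O : Finset (Fin q ⊕ Unit)) : Matrix (↥O ⊕ Unit) (↥O ⊕ Unit) ℝ :=
  Matrix.fromBlocks ((SigmaX q τ B x).submatrix Subtype.val Subtype.val)
    (Matrix.of fun i _ =>
      ((SigmaX q τ B x).submatrix Subtype.val id).mulVec (betaX q τ B x) i)
    (Matrix.of fun _ j =>
      ((SigmaX q τ B x).submatrix Subtype.val id).mulVec (betaX q τ B x) j)
    (Matrix.of fun _ _ =>
      betaX q τ B x ⬝ᵥ (SigmaX q τ B x).mulVec (betaX q τ B x) + R ^ 2)

/-! ### Arrowhead matrices -/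

/-- The arrowhead matrix with blocks `τ I`, `(u, 0)` and `[[τ, c], [c, d]]`; up to reindexing this
is `Ω_x^O` for `p ∈ O`, with `u = 2 x_{O'} / B` and the last two indices standing for `p` and the
response. -/
noncomputable def arrowMat {m : Type*} [DecidableEq m] (τ c d : ℝ) (u : m → ℝ) :
    Matrix (m ⊕ Fin 2) (m ⊕ Fin 2) ℝ :=
  Matrix.fromBlocks (τ • (1 : Matrix m m ℝ))
    (Matrix.of fun i k => if k = 0 then u i else 0)
    (Matrix.of fun k j => if k = 0 then u j else 0)
    !![τ, c; c, d]

/-- The determinant of the Schur complement of the block `τ I` in `arrowMat`, as a function of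
`t = ‖u‖²`. -/
noncomputable def schurDet (τ c d t : ℝ) : ℝ := (τ - t / τ) * d - c ^ 2

section Arrow

variable {m : Type*} [Fintype m] [DecidableEq m]

lemma arrowMat_isHermitian {m : Type*} [DecidableEq m] (τ c d : ℝ) (u : m → ℝ) : (arrowMat τ c d u).IsHermitian := by
  ext i j
  rcases i with i | i <;> rcases j with j | j
  · by_cases h : i = j
    · simp [arrowMat, h]
    · simp [arrowMat, h, Ne.symm h]
  · simp [arrowMat]
  · simp [arrowMat]
  · fin_cases i <;> fin_cases j <;> simp [arrowMat]

lemma arrowMat_det {τ : ℝ} (hτ : τ ≠ 0) (c d : ℝ) (u : m → ℝ) :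
    (arrowMat τ c d u).det = τ ^ Fintype.card m * schurDet τ c d (∑ i, u i ^ 2) := by
  let _ : Invertible (τ • (1 : Matrix m m ℝ)) :=
    ⟨τ⁻¹ • 1, by simp [smul_smul, hτ], by simp [smul_smul, hτ]⟩
  have hinv : ⅟(τ • (1 : Matrix m m ℝ)) = τ⁻¹ • 1 := rfl
  rw [arrowMat, Matrix.det_fromBlocks₁₁, hinv, Matrix.det_smul, Matrix.det_one, mul_one]
  congr 1
  rw [Matrix.det_fin_two]
  simp [schurDet, Matrix.mul_apply]
  have h : ∑ x, τ⁻¹ * u x * u x = (∑ i, u i ^ 2) / τ := by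
    rw [Finset.sum_div]
    exact Finset.sum_congr rfl fun i _ => by ring
  rw [h]
  ring

/-- Completing the square in the first block, the form is a sum of squares plus the quadratic form
of the Schur complement, a `2 × 2` form with positive determinant. -/
lemma arrowMat_posDef {τ c d : ℝ} (hτ : 0 < τ) (hd : 0 < d) (u : m → ℝ)
    (hD : 0 < schurDet τ c d (∑ i, u i ^ 2)) : (arrowMat τ c d u).PosDef := by
  refine Matrix.PosDef.of_dotProduct_mulVec_pos (arrowMat_isHermitian τ c d u) fun z hz => ?_
  set t := ∑ i, u i ^ 2 with ht
  have key : star z ⬝ᵥ (arrowMat τ c d u *ᵥ z) =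
      τ * ∑ i, (z (Sum.inl i) + u i * z (Sum.inr 0) / τ) ^ 2
        + (τ - t / τ) * z (Sum.inr 0) ^ 2 + 2 * c * z (Sum.inr 0) * z (Sum.inr 1)
        + d * z (Sum.inr 1) ^ 2 := by
    have e1 : τ * ∑ i, (z (Sum.inl i) + u i * z (Sum.inr 0) / τ) ^ 2 =
        τ * ∑ i, z (Sum.inl i) ^ 2 + 2 * z (Sum.inr 0) * ∑ i, u i * z (Sum.inl i)
          + t / τ * z (Sum.inr 0) ^ 2 := by
      rw [ht, Finset.mul_sum, Finset.mul_sum, Finset.mul_sum, Finset.sum_div, Finset.sum_mul,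
        ← Finset.sum_add_distrib, ← Finset.sum_add_distrib]
      exact Finset.sum_congr rfl fun i _ => by field_simp; ring
    rw [e1]
    have e2 : ∑ i, z (Sum.inl i) * (τ * z (Sum.inl i) + u i * z (Sum.inr 0)) =
        τ * ∑ i, z (Sum.inl i) ^ 2 + z (Sum.inr 0) * ∑ i, u i * z (Sum.inl i) := by
      rw [Finset.mul_sum, Finset.mul_sum, ← Finset.sum_add_distrib]
      exact Finset.sum_congr rfl fun i _ => by ring
    simp [arrowMat, Matrix.mulVec, dotProduct, Fin.sum_univ_two, Matrix.one_apply,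
      Fintype.sum_sum_type]
    rw [e2]
    ring
  rw [key]
  set a := z (Sum.inr 0)
  set b := z (Sum.inr 1)
  have hS : 0 ≤ ∑ i, (z (Sum.inl i) + u i * a / τ) ^ 2 :=
    Finset.sum_nonneg fun i _ => sq_nonneg _
  have h2 : d * ((τ - t / τ) * a ^ 2 + 2 * c * a * b + d * b ^ 2) =
      schurDet τ c d t * a ^ 2 + (c * a + d * b) ^ 2 := by
    unfold schurDet; ring
  by_cases ha : a = 0
  · by_cases hb : b = 0
    · have hne : ∃ i, z (Sum.inl i) ≠ 0 := by
        by_contra! h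
        apply hz
        ext k
        rcases k with k | k
        · exact h k
        · fin_cases k
          · exact ha
          · exact hb
      obtain ⟨i, hi⟩ := hne
      have : 0 < ∑ i, (z (Sum.inl i) + u i * a / τ) ^ 2 :=
        Finset.sum_pos' (fun i _ => sq_nonneg _) ⟨i, Finset.mem_univ _, by
          rw [ha, mul_zero, zero_div, add_zero]; positivity⟩
      have := mul_pos hτ this
      simp only [ha, hb] at this ⊢
      linarith
    · have : 0 < d * b ^ 2 := by positivity
      have := mul_nonneg hτ.le hS
      simp only [ha] at this ⊢
      nlinarith
  · have h3 : 0 < d * ((τ - t / τ) * a ^ 2 + 2 * c * a * b + d * b ^ 2) := by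
      rw [h2]; positivity
    have h4 := pos_of_mul_pos_right h3 hd.le
    have := mul_nonneg hτ.le hS
    linarith

/-- The difference of two arrowhead matrices is `w eᵀ + e wᵀ`, where `e` is the basis vector of the
index `p`, so the trace only involves the column `K₂⁻¹ e`, which is known explicitly. -/
lemma arrowMat_trace {τ c d : ℝ} (hτ : 0 < τ) (u₁ u₂ : m → ℝ)
    (hD : 0 < schurDet τ c d (∑ i, u₂ i ^ 2)) :
    Matrix.trace ((arrowMat τ c d u₂)⁻¹ * arrowMat τ c d u₁) =
      Fintype.card (m ⊕ Fin 2)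
        - 2 * d / (τ * schurDet τ c d (∑ i, u₂ i ^ 2)) * ∑ i, (u₁ i - u₂ i) * u₂ i := by
  set D := schurDet τ c d (∑ i, u₂ i ^ 2) with hDdef
  set K := arrowMat τ c d u₂ with hK
  have hdet : IsUnit K.det := by
    rw [isUnit_iff_ne_zero, hK, arrowMat_det hτ.ne']
    positivity
  let e : m ⊕ Fin 2 → ℝ := Sum.elim 0 ![1, 0]
  let w : m ⊕ Fin 2 → ℝ := Sum.elim (fun i => u₁ i - u₂ i) 0
  -- The column `K⁻¹ e`.
  let g : m ⊕ Fin 2 → ℝ := Sum.elim (fun i => -(u₂ i / τ) * (d / D)) ![d / D, -c / D]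
  have hdiff : arrowMat τ c d u₁ = K + (Matrix.vecMulVec e w + Matrix.vecMulVec w e) := by
    ext i j
    rcases i with i | i <;> rcases j with j | j
    · simp [hK, arrowMat, e, w, Matrix.vecMulVec_apply]
    · fin_cases j <;> simp [hK, arrowMat, e, w, Matrix.vecMulVec_apply]
    · fin_cases i <;> simp [hK, arrowMat, e, w, Matrix.vecMulVec_apply]
    · fin_cases i <;> fin_cases j <;> simp [hK, arrowMat, e, w, Matrix.vecMulVec_apply]
  have hg : K *ᵥ g = e := by
    ext k
    rcases k with k | k
    · simp [hK, arrowMat, e, g, Matrix.mulVec, dotProduct, Matrix.one_apply]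
      field_simp
      ring
    · have hsum : ∑ i, u₂ i * (u₂ i / τ * (d / D)) = (∑ i, u₂ i ^ 2) / τ * (d / D) := by
        rw [Finset.sum_div, Finset.sum_mul]
        exact Finset.sum_congr rfl fun i _ => by ring
      have hDne : D ≠ 0 := hD.ne'
      fin_cases k
      · simp [hK, arrowMat, e, g, Matrix.mulVec, dotProduct]
        rw [hsum]
        have h1 : (τ - (∑ i, u₂ i ^ 2) / τ) * d - c ^ 2 = D := rfl
        calc _ = ((τ - (∑ i, u₂ i ^ 2) / τ) * d - c ^ 2) / D := by ring
          _ = 1 := by rw [h1, div_self hDne]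
      · simp [hK, arrowMat, e, g, Matrix.mulVec, dotProduct]
        ring
  have hinv : K⁻¹ *ᵥ e = g := by
    rw [← hg, Matrix.mulVec_mulVec, Matrix.nonsing_inv_mul _ hdet, Matrix.one_mulVec]
  have hsymm : (K⁻¹)ᵀ = K⁻¹ := by
    have := (arrowMat_isHermitian τ c d u₂).inv
    rw [Matrix.IsHermitian, Matrix.conjTranspose_eq_transpose_of_trivial] at this
    exact this
  have hwe : (K⁻¹ *ᵥ w) ⬝ᵥ e = g ⬝ᵥ w := by
    rw [dotProduct_comm, Matrix.dotProduct_mulVec, ← Matrix.mulVec_transpose, hsymm, hinv]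
  have hgw : g ⬝ᵥ w = -(d / (τ * D)) * ∑ i, (u₁ i - u₂ i) * u₂ i := by
    simp only [g, w, dotProduct, Fintype.sum_sum_type, Sum.elim_inl, Sum.elim_inr, Pi.zero_apply,
      mul_zero, Finset.sum_const_zero, add_zero, Finset.mul_sum]
    exact Finset.sum_congr rfl fun i _ => by field_simp
  rw [hdiff, Matrix.mul_add, Matrix.nonsing_inv_mul _ hdet, Matrix.trace_add, Matrix.trace_one,
    Matrix.mul_add, Matrix.trace_add, Matrix.mul_vecMulVec, Matrix.mul_vecMulVec,
    Matrix.trace_vecMulVec, Matrix.trace_vecMulVec, hwe, hinv, hgw]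
  ring

/-- The divergence bound for arrowhead matrices, from `log y ≤ y - 1`. -/
lemma arrowMat_kl_le {τ c d : ℝ} (hτ : 0 < τ) (hd : 0 < d) (u₁ u₂ : m → ℝ) {δ : ℝ} (hδ : 0 < δ)
    (hD₁ : δ ≤ schurDet τ c d (∑ i, u₁ i ^ 2)) (hD₂ : δ ≤ schurDet τ c d (∑ i, u₂ i ^ 2)) :
    (1 / 2 : ℝ) * (Real.log ((arrowMat τ c d u₂).det / (arrowMat τ c d u₁).det)
        - Fintype.card (m ⊕ Fin 2)
        + Matrix.trace ((arrowMat τ c d u₂)⁻¹ * arrowMat τ c d u₁))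
      ≤ d / (τ * δ) * (|(∑ i, u₁ i ^ 2) - ∑ i, u₂ i ^ 2| + ∑ i, |u₁ i - u₂ i| * |u₂ i|) := by
  have h₁ := hδ.trans_le hD₁
  have h₂ := hδ.trans_le hD₂
  rw [arrowMat_trace hτ u₁ u₂ h₂, arrowMat_det hτ.ne', arrowMat_det hτ.ne',
    mul_div_mul_left _ _ (pow_ne_zero _ hτ.ne')]
  set t₁ := ∑ i, u₁ i ^ 2
  set t₂ := ∑ i, u₂ i ^ 2
  set D₁ := schurDet τ c d t₁ with hD₁def
  set D₂ := schurDet τ c d t₂ with hD₂def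
  have hlog : Real.log (D₂ / D₁) ≤ d / (τ * D₁) * (t₁ - t₂) := by
    refine (Real.log_le_sub_one_of_pos (div_pos h₂ h₁)).trans_eq ?_
    have : D₂ - D₁ = d / τ * (t₁ - t₂) := by
      rw [hD₁def, hD₂def, schurDet, schurDet]; ring
    rw [div_sub_one h₁.ne', this]
    field_simp
  have hlog' : d / (τ * D₁) * (t₁ - t₂) ≤ d / (τ * δ) * |t₁ - t₂| :=
    (mul_le_mul_of_nonneg_left (le_abs_self _) (by positivity)).trans (by gcongr)
  have hsum : -(d / (τ * D₂)) * ∑ i, (u₁ i - u₂ i) * u₂ i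
      ≤ d / (τ * δ) * ∑ i, |u₁ i - u₂ i| * |u₂ i| := by
    have h3 : -(∑ i, (u₁ i - u₂ i) * u₂ i) ≤ ∑ i, |u₁ i - u₂ i| * |u₂ i| := by
      rw [← Finset.sum_neg_distrib]
      exact Finset.sum_le_sum fun i _ => by
        rw [← abs_mul]; exact neg_le_abs _
    calc _ = d / (τ * D₂) * -(∑ i, (u₁ i - u₂ i) * u₂ i) := by ring
      _ ≤ d / (τ * D₂) * ∑ i, |u₁ i - u₂ i| * |u₂ i| := by gcongr
      _ ≤ _ := by gcongr
  have habs : 0 ≤ d / (τ * δ) * |t₁ - t₂| := by positivity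
  have hre : 2 * d / (τ * D₂) * ∑ i, (u₁ i - u₂ i) * u₂ i =
      -2 * (-(d / (τ * D₂)) * ∑ i, (u₁ i - u₂ i) * u₂ i) := by ring
  rw [hre, mul_add]
  linarith

end Arrow

/-! ### Reduction of `Ω_x^O` to an arrowhead matrix -/

section Reduction

variable {q : ℕ}

/-- The only possibly nonzero coordinate of `Σ_x β_x`, as a function of `s = ‖x‖²`. -/
noncomputable def crossCov (τ B s : ℝ) : ℝ := B / 2 * (τ - 4 * s / B ^ 2 / τ)

lemma SigmaX_mulVec_betaX {τ B : ℝ} (hτ : τ ≠ 0) (hB : B ≠ 0) (x : Fin q → ℝ) :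
    (SigmaX q τ B x).mulVec (betaX q τ B x) =
      Sum.elim (0 : Fin q → ℝ) (fun _ => crossCov τ B (∑ i, x i ^ 2)) := by
  ext k
  rcases k with k | k
  · simp [SigmaX, betaX, Matrix.mulVec, dotProduct, Matrix.one_apply]
    field_simp
    ring
  · have h : ∑ i, 2 * x i / B * (-x i / τ) = -(2 / (B * τ)) * ∑ i, x i ^ 2 := by
      rw [Finset.mul_sum]
      exact Finset.sum_congr rfl fun i _ => by field_simp
    simp [SigmaX, betaX, Matrix.mulVec, dotProduct, crossCov]
    rw [h]
    field_simp
    ring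

lemma submatrix_mulVec_betaX {τ B : ℝ} (hτ : τ ≠ 0) (hB : B ≠ 0) (x : Fin q → ℝ)
    (O : Finset (Fin q ⊕ Unit)) (i : ↥O) :
    ((SigmaX q τ B x).submatrix Subtype.val id).mulVec (betaX q τ B x) i =
      Sum.elim (0 : Fin q → ℝ) (fun _ => crossCov τ B (∑ i, x i ^ 2)) i.1 :=
  congrFun (SigmaX_mulVec_betaX hτ hB x) i.1

lemma delta_eq {τ B : ℝ} (hτ : τ ≠ 0) (hB : B ≠ 0) (R : ℝ) (x : Fin q → ℝ) :
    betaX q τ B x ⬝ᵥ (SigmaX q τ B x).mulVec (betaX q τ B x) + R ^ 2 =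
      B / 2 * crossCov τ B (∑ i, x i ^ 2) + R ^ 2 := by
  rw [SigmaX_mulVec_betaX hτ hB]
  simp [betaX, dotProduct]

/-- For `p ∈ O`, the index set of `Ω_x^O` is `O'` together with `p` and the response. -/
noncomputable def indexEquiv (O : Finset (Fin q ⊕ Unit)) (h : Sum.inr () ∈ O) :
    ↥(Finset.univ.filter (fun j : Fin q => Sum.inl j ∈ O)) ⊕ Fin 2 ≃ ↥O ⊕ Unit :=
  Equiv.ofBijective
    (Sum.elim (fun j => Sum.inl ⟨Sum.inl j.1, (Finset.mem_filter.mp j.2).2⟩)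
      ![Sum.inl ⟨Sum.inr (), h⟩, Sum.inr ()]) (by
    constructor
    · rintro (⟨i, hi⟩ | i) (⟨j, hj⟩ | j) hij
      · simpa using hij
      · fin_cases j <;> simp at hij
      · fin_cases i <;> simp at hij
      · fin_cases i <;> fin_cases j <;> simp at hij ⊢
    · rintro (⟨i | i, hi⟩ | i)
      · exact ⟨Sum.inl ⟨i, by simpa using hi⟩, rfl⟩
      · exact ⟨Sum.inr 0, rfl⟩
      · exact ⟨Sum.inr 1, rfl⟩)

lemma indexEquiv_inl (O : Finset (Fin q ⊕ Unit)) (h : Sum.inr () ∈ O)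
    (j : ↥(Finset.univ.filter (fun j : Fin q => Sum.inl j ∈ O))) :
    indexEquiv O h (Sum.inl j) = Sum.inl ⟨Sum.inl j.1, (Finset.mem_filter.mp j.2).2⟩ := rfl

lemma indexEquiv_inr_zero (O : Finset (Fin q ⊕ Unit)) (h : Sum.inr () ∈ O) :
    indexEquiv O h (Sum.inr 0) = Sum.inl ⟨Sum.inr (), h⟩ := rfl

lemma indexEquiv_inr_one (O : Finset (Fin q ⊕ Unit)) (h : Sum.inr () ∈ O) :
    indexEquiv O h (Sum.inr 1) = Sum.inr () := rfl

lemma OmegaXO_submatrix {τ B : ℝ} (hτ : τ ≠ 0) (hB : B ≠ 0) (R : ℝ) (x : Fin q → ℝ)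
    (O : Finset (Fin q ⊕ Unit)) (h : Sum.inr () ∈ O) :
    (OmegaXO q τ B R x O).submatrix (indexEquiv O h) (indexEquiv O h) =
      arrowMat τ (crossCov τ B (∑ i, x i ^ 2)) (B / 2 * crossCov τ B (∑ i, x i ^ 2) + R ^ 2)
        (fun j => 2 * x j.1 / B) := by
  ext i j
  simp only [OmegaXO, delta_eq hτ hB, submatrix_mulVec_betaX hτ hB]
  rcases i with i | i <;> rcases j with j | j
  · by_cases hij : i = j
    · subst hij
      simp [indexEquiv_inl, arrowMat, SigmaX]
    · have hij' : i.1 ≠ j.1 := fun h => hij (Subtype.ext h)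
      simp [indexEquiv_inl, arrowMat, SigmaX, hij, hij']
  · fin_cases j <;>
      simp [indexEquiv_inl, indexEquiv_inr_zero, indexEquiv_inr_one, arrowMat, SigmaX]
  · fin_cases i <;>
      simp [indexEquiv_inl, indexEquiv_inr_zero, indexEquiv_inr_one, arrowMat, SigmaX]
  · fin_cases i <;> fin_cases j <;>
      simp [indexEquiv_inr_zero, indexEquiv_inr_one, arrowMat, SigmaX]

lemma OmegaXO_eq {τ B : ℝ} (hτ : τ ≠ 0) (hB : B ≠ 0) (R : ℝ) (x : Fin q → ℝ)
    (O : Finset (Fin q ⊕ Unit)) (h : Sum.inr () ∈ O) :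
    OmegaXO q τ B R x O =
      (arrowMat τ (crossCov τ B (∑ i, x i ^ 2)) (B / 2 * crossCov τ B (∑ i, x i ^ 2) + R ^ 2)
        (fun j : ↥(Finset.univ.filter (fun j : Fin q => Sum.inl j ∈ O)) => 2 * x j.1 / B)).submatrix
        (indexEquiv O h).symm (indexEquiv O h).symm := by
  rw [← OmegaXO_submatrix hτ hB R x O h, Matrix.submatrix_submatrix]
  simp

lemma trace_submatrix_symm {m n : Type*} [Fintype m] [Fintype n] (e : m ≃ n) (M : Matrix m m ℝ) :
    Matrix.trace (M.submatrix e.symm e.symm) = Matrix.trace M :=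
  Equiv.sum_comp e.symm fun i => M i i

end Reduction

/-! ### Lower bounds and the constant -/

/-- If `‖x‖ ≤ B τ / 4` then `c ≥ 3 τ B / 8`. -/
lemma crossCov_ge {τ B s : ℝ} (hτ : 0 < τ) (hB : 0 < B) (hs : s ≤ (B * τ / 4) ^ 2) :
    3 * τ * B / 8 ≤ crossCov τ B s := by
  have : 4 * s / B ^ 2 / τ ≤ τ / 4 := by
    rw [div_div, div_le_iff₀ (by positivity)]
    calc 4 * s ≤ 4 * (B * τ / 4) ^ 2 := by linarith
      _ = _ := by ring
  unfold crossCov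
  nlinarith

/-- Since `τ - t / τ ≥ 2 c / B`, the Schur determinant is at least `(2 c / B) Δ - c² = 2 c R² / B`,
uniformly in `t`. -/
lemma schurDet_ge {τ B R s t : ℝ} (hτ : 0 < τ) (hB : 0 < B)
    (hc : 0 < crossCov τ B s) (ht : t ≤ 4 * s / B ^ 2) :
    2 * crossCov τ B s * R ^ 2 / B ≤
      schurDet τ (crossCov τ B s) (B / 2 * crossCov τ B s + R ^ 2) t := by
  set c := crossCov τ B s with hcdef
  have h1 : 2 * c / B ≤ τ - t / τ := by
    have h2 : 2 * c / B = τ - 4 * s / B ^ 2 / τ := by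
      rw [hcdef, crossCov]; field_simp
    rw [h2]
    gcongr
  calc 2 * c * R ^ 2 / B = 2 * c / B * (B / 2 * c + R ^ 2) - c ^ 2 := by field_simp; ring
    _ ≤ _ := by unfold schurDet; gcongr

/-- The constant: with `δ = 2 c R² / B` the factor equals `1 / (τ R²) + 2 / (τ B c)`, and
`c ≥ 3 τ B / 8` bounds this by `1 / (τ R²) + 16 / (3 τ² B²)`. -/
lemma const_le_s15 {τ B R c : ℝ} (hτ : 0 < τ) (hB : 0 < B) (hR : 0 < R) (hc : 3 * τ * B / 8 ≤ c) :
    (B / 2 * c + R ^ 2) / (τ * (2 * c * R ^ 2 / B)) * (4 / B ^ 2) ≤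
      10 * max 1 (1 / τ ^ 2) * max (1 / B ^ 2) (1 / R ^ 2) := by
  have hc0 : 0 < c := lt_of_lt_of_le (by positivity) hc
  set M := max 1 (1 / τ ^ 2)
  set N := max (1 / B ^ 2) (1 / R ^ 2)
  have hM1 : 1 ≤ M := le_max_left _ _
  have hM2 : 1 / τ ^ 2 ≤ M := le_max_right _ _
  have hN1 : 1 / B ^ 2 ≤ N := le_max_left _ _
  have hN2 : 1 / R ^ 2 ≤ N := le_max_right _ _
  have hN0 : 0 < N := lt_of_lt_of_le (by positivity) hN1
  have hM3 : 1 / τ ≤ M := by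
    have h : 1 / τ ^ 2 = (1 / τ) ^ 2 := by rw [div_pow, one_pow]
    rw [h] at hM2
    nlinarith [sq_nonneg (1 / τ - 1)]
  have e : (B / 2 * c + R ^ 2) / (τ * (2 * c * R ^ 2 / B)) * (4 / B ^ 2) =
      1 / τ * (1 / R ^ 2) + 2 / (τ * B * c) := by
    field_simp
    ring
  have h2 : 2 / (τ * B * c) ≤ 16 / 3 * (1 / τ ^ 2 * (1 / B ^ 2)) := by
    calc 2 / (τ * B * c) ≤ 2 / (τ * B * (3 * τ * B / 8)) := by gcongr
      _ = _ := by field_simp; norm_num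
  have h3 : 1 / τ * (1 / R ^ 2) ≤ M * N := by gcongr
  have h4 : 1 / τ ^ 2 * (1 / B ^ 2) ≤ M * N := by gcongr
  have h5 : 0 < M * N := by positivity
  rw [e]
  linarith

theorem stmt15 (q : ℕ) (hq : 1 ≤ q) (B R lamm lamp : ℝ)
    (hB : 0 < B) (hR : 0 < R) (hlamm : 0 < lamm) (hlam : lamm < lamp)
    (x₁ x₂ : Fin q → ℝ)
    (hnorm : eNorm x₁ = eNorm x₂) (hsize : eNorm x₂ ≤ B * (lamp - lamm) / 8)
    (O : Finset (Fin q ⊕ Unit)) :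
    let τ : ℝ := (lamm + lamp) / 2
    -- `O'` consists of the coordinates of `O` other than the last coordinate `p`
    let O' : Finset (Fin q) := Finset.univ.filter (fun j : Fin q => Sum.inl j ∈ O)
    (Sum.inr () ∈ O →
      (OmegaXO q τ B R x₁ O).PosDef ∧ (OmegaXO q τ B R x₂ O).PosDef ∧
      (1 / 2 : ℝ) * (Real.log ((OmegaXO q τ B R x₂ O).det / (OmegaXO q τ B R x₁ O).det)
          - ((O.card : ℝ) + 1)
          + Matrix.trace ((OmegaXO q τ B R x₂ O)⁻¹ * OmegaXO q τ B R x₁ O))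
        ≤ 10 * max 1 (1 / τ ^ 2) * max (1 / B ^ 2) (1 / R ^ 2) *
            (|(∑ j ∈ O', (x₁ j) ^ 2) - ∑ j ∈ O', (x₂ j) ^ 2|
              + ∑ j ∈ O', |x₁ j - x₂ j| * |x₂ j|)) ∧
    (Sum.inr () ∉ O → OmegaXO q τ B R x₁ O = OmegaXO q τ B R x₂ O) := by
  intro τ O'
  have hτ : 0 < τ := by simp only [τ]; linarith
  have hs : ∑ i, x₁ i ^ 2 = ∑ i, x₂ i ^ 2 :=
    (Real.sqrt_inj (Finset.sum_nonneg fun i _ => sq_nonneg _)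
      (Finset.sum_nonneg fun i _ => sq_nonneg _)).mp hnorm
  have hsle : ∑ i, x₂ i ^ 2 ≤ (B * τ / 4) ^ 2 := by
    refine (Real.sqrt_le_left (by positivity)).mp (hsize.trans ?_)
    simp only [τ]
    nlinarith
  refine ⟨fun hp => ?_, fun hp => ?_⟩
  · have hcge := crossCov_ge hτ hB hsle
    have E₁ := OmegaXO_eq hτ.ne' hB.ne' R x₁ O hp
    have E₂ := OmegaXO_eq hτ.ne' hB.ne' R x₂ O hp
    rw [hs] at E₁
    set s := ∑ i, x₂ i ^ 2 with hsdef
    set c := crossCov τ B s with hc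
    have hc0 : 0 < c := lt_of_lt_of_le (by positivity) hcge
    set d := B / 2 * c + R ^ 2 with hd
    have hd0 : 0 < d := by positivity
    set u₁ : ↥O' → ℝ := fun j => 2 * x₁ j.1 / B with hu₁
    set u₂ : ↥O' → ℝ := fun j => 2 * x₂ j.1 / B with hu₂
    have ht : ∀ x : Fin q → ℝ, ∑ j : ↥O', (2 * x j.1 / B) ^ 2 =
        4 / B ^ 2 * ∑ j ∈ O', x j ^ 2 := fun x => by
      rw [Finset.sum_coe_sort O' fun j => (2 * x j / B) ^ 2, Finset.mul_sum]
      exact Finset.sum_congr rfl fun j _ => by ring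
    have htle : ∀ x : Fin q → ℝ, ∑ i, x i ^ 2 = s →
        ∑ j : ↥O', (2 * x j.1 / B) ^ 2 ≤ 4 * s / B ^ 2 := fun x hx => by
      rw [ht, ← hx, mul_div_right_comm]
      gcongr
      exact Finset.subset_univ O'
    have hD₁ := schurDet_ge (R := R) hτ hB hc0 (htle x₁ hs)
    have hD₂ := schurDet_ge (R := R) hτ hB hc0 (htle x₂ rfl)
    have hδ : 0 < 2 * c * R ^ 2 / B := by positivity
    have hcard : (O.card : ℝ) + 1 = Fintype.card (↥O' ⊕ Fin 2) := by
      rw [Fintype.card_congr (indexEquiv O hp)]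
      simp
    refine ⟨?_, ?_, ?_⟩
    · rw [E₁]
      exact (arrowMat_posDef hτ hd0 u₁ (hδ.trans_le hD₁)).submatrix (indexEquiv O hp).symm.injective
    · rw [E₂]
      exact (arrowMat_posDef hτ hd0 u₂ (hδ.trans_le hD₂)).submatrix (indexEquiv O hp).symm.injective
    · rw [E₁, E₂, Matrix.inv_submatrix_equiv, Matrix.submatrix_mul_equiv, trace_submatrix_symm,
        Matrix.det_submatrix_equiv_self, Matrix.det_submatrix_equiv_self, hcard]
      refine (arrowMat_kl_le hτ hd0 u₁ u₂ hδ hD₁ hD₂).trans ?_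
      have hcross : ∑ j, |u₁ j - u₂ j| * |u₂ j| =
          4 / B ^ 2 * ∑ j ∈ O', |x₁ j - x₂ j| * |x₂ j| := by
        rw [Finset.sum_coe_sort O' fun j => |2 * x₁ j / B - 2 * x₂ j / B| * |2 * x₂ j / B|,
          Finset.mul_sum]
        refine Finset.sum_congr rfl fun j _ => ?_
        have h1 : 2 * x₁ j / B - 2 * x₂ j / B = 2 / B * (x₁ j - x₂ j) := by ring
        have h2 : 2 * x₂ j / B = 2 / B * x₂ j := by ring
        rw [h1, h2, abs_mul, abs_mul, abs_of_pos (show 0 < 2 / B by positivity)]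
        ring
      have hquad : |(∑ j, u₁ j ^ 2) - ∑ j, u₂ j ^ 2| =
          4 / B ^ 2 * |(∑ j ∈ O', x₁ j ^ 2) - ∑ j ∈ O', x₂ j ^ 2| := by
        rw [ht x₁, ht x₂, ← mul_sub, abs_mul, abs_of_pos (show 0 < 4 / B ^ 2 by positivity)]
      rw [hcross, hquad, ← mul_add, ← mul_assoc]
      refine mul_le_mul_of_nonneg_right (const_le_s15 hτ hB hR hcge) ?_
      exact add_nonneg (abs_nonneg _)
        (Finset.sum_nonneg fun j _ => mul_nonneg (abs_nonneg (x₁ j - x₂ j)) (abs_nonneg (x₂ j)))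
  -- Without `p`, the vector `x` only enters through `Δ_x`, hence through `‖x‖`.
  · ext i j
    simp only [OmegaXO, delta_eq hτ.ne' hB.ne', submatrix_mulVec_betaX hτ.ne' hB.ne', hs]
    rcases i with ⟨i | i, hi⟩ | i
    · rcases j with ⟨j | j, hj⟩ | j
      · simp [SigmaX]
      · exact absurd hj hp
      · simp
    · exact absurd hi hp
    · rcases j with ⟨j | j, hj⟩ | j <;> simp
end
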